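/- arXiv:1005.5185 — 6 statements merged into one kernel-verified Lean document; each statement's English description precedes it below -/
import Mathlib

section
/- Let x ∈ B be a nonzero monomial of degree d' (i.e., x = π_B(x̂) where x̂ is the unique pure tensor outside ⟨R'⟩ with image x) and let w ∈ l.ann_B(x) be homogeneous of degree d. Write the canonical lift of w as ŵ = Σ_{t=1}^k α_t w_t, where the w_t are distinct pure tensors of degree d lying outside ⟨R'⟩ and α_t ∈ K ∖ {0}. Then π_B(w_t x̂) = 0 in B for every t with 1 ≤ t ≤ k. -/
noncomputable section

inductive Gen (n : ℕ) : Type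
  | a : Fin (n+1) → Gen n
  | b : Fin (n+1) → Gen n
  | c : Fin (n+1) → Gen n

variable (K : Type) [Field K] (n : ℕ)

/-- The tensor algebra `T(V)` on the span of the generators, i.e. the free algebra. -/
abbrev FA := FreeAlgebra K (Gen n)

/-- `a_i`, with the convention that out-of-range indices give `0`. -/
def ga (i : ℤ) : FA K n :=
  if h : 0 ≤ i ∧ i ≤ (n : ℤ) then FreeAlgebra.ι K (Gen.a ⟨i.toNat, by omega⟩) else 0

def gb (i : ℤ) : FA K n :=
  if h : 0 ≤ i ∧ i ≤ (n : ℤ) then FreeAlgebra.ι K (Gen.b ⟨i.toNat, by omega⟩) else 0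

def gc (i : ℤ) : FA K n :=
  if h : 0 ≤ i ∧ i ≤ (n : ℤ) then FreeAlgebra.ι K (Gen.c ⟨i.toNat, by omega⟩) else 0

/-- The set `R` of defining relations. -/
def rels : Set (FA K n) :=
  { x | x = ga K n n * gb K n n * gc K n n ∨ x = gc K n 0 * ga K n 0 ∨
      ∃ i : ℕ, i < n ∧
        (x = ga K n i * gb K n i * gc K n i + gc K n (i+1) * ga K n (i+1) * gb K n (i+1) ∨
         x = gb K n (i+1) * gc K n (i+1) * ga K n (i+1) ∨
         x = gc K n i * gc K n (i+1) ∨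
         x = gb K n (i+1) * ga K n i) }

/-- The relation whose ring-quotient is `B = T(V)/⟨R⟩`. -/
def BRel (x y : FA K n) : Prop := x ∈ rels K n ∧ y = 0

/-- The algebra `B = T(V)/⟨R⟩`. -/
abbrev B := RingQuot (BRel K n)

/-- The quotient map `π_B : T(V) → B`. -/
def πB : FA K n →ₐ[K] B K n := RingQuot.mkAlgHom K (BRel K n)

/-- The image of `a_i` in `B` (zero for out-of-range indices). -/
def aB (i : ℤ) : B K n := πB K n (ga K n i)
def bB (i : ℤ) : B K n := πB K n (gb K n i)
def cB (i : ℤ) : B K n := πB K n (gc K n i)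

/-- The left annihilator of `x`, as a left ideal of `B`. -/
def lann (x : B K n) : Ideal (B K n) where
  carrier := {w | w * x = 0}
  add_mem' := by
    intro a b ha hb
    simp only [Set.mem_setOf_eq, add_mul] at *
    rw [ha, hb, add_zero]
  zero_mem' := by simp
  smul_mem' := by
    intro c w hw
    simp only [Set.mem_setOf_eq, smul_eq_mul, mul_assoc] at *
    rw [hw, mul_zero]

end

/-- The pure tensor in `T(V)` corresponding to a word in the generators. -/
def word (K : Type) [Field K] (n : ℕ) (l : List (Gen n)) : FA K n :=
  (l.map (FreeAlgebra.ι K)).prod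

/-- The set `R'` of forbidden subwords, as words in the generators. -/
def Rwords' (n : ℕ) : Set (List (Gen n)) :=
  { l | l = [Gen.a (Fin.last n), Gen.b (Fin.last n), Gen.c (Fin.last n)] ∨
        l = [Gen.c 0, Gen.a 0] ∨
        ∃ i : Fin n,
          l = [Gen.c i.succ, Gen.a i.succ, Gen.b i.succ] ∨
          l = [Gen.b i.succ, Gen.c i.succ, Gen.a i.succ] ∨
          l = [Gen.c i.castSucc, Gen.c i.succ] ∨
          l = [Gen.b i.succ, Gen.a i.castSucc] }

/-- A word is in canonical form (is "good") if it contains no factor from `R'`. -/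
def Good (n : ℕ) (l : List (Gen n)) : Prop := ¬ ∃ w ∈ Rwords' n, w <:+: l


section Aux

theorem good_nil (n : ℕ) : Good n [] := by
  rintro ⟨w, hw, h⟩
  have : w = [] := List.eq_nil_of_infix_nil h
  subst this
  simp [Rwords'] at hw

/-- heads giving zero -/
def ZH (n : ℕ) (l : List (Gen n)) : Prop :=
  (∃ y, l = Gen.a (Fin.last n) :: Gen.b (Fin.last n) :: Gen.c (Fin.last n) :: y) ∨
  (∃ y, l = Gen.c 0 :: Gen.a 0 :: y) ∨
  ∃ i : Fin n, ∃ y, l = Gen.b i.succ :: Gen.c i.succ :: Gen.a i.succ :: y ∨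
    l = Gen.c i.castSucc :: Gen.c i.succ :: y ∨
    l = Gen.b i.succ :: Gen.a i.castSucc :: y

def RH (n : ℕ) (l : List (Gen n)) : Prop :=
  ∃ i : Fin n, ∃ y, l = Gen.c i.succ :: Gen.a i.succ :: Gen.b i.succ :: y

theorem good_cons (n : ℕ) (g : Gen n) (l : List (Gen n)) :
    Good n (g :: l) ↔ ¬ ZH n (g :: l) ∧ ¬ RH n (g :: l) ∧ Good n l := by
  have key : (∃ w ∈ Rwords' n, w <+: g :: l) ↔ ZH n (g :: l) ∨ RH n (g :: l) := by
    constructor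
    · rintro ⟨w, hw, y, hy⟩
      rcases hw with rfl | rfl | ⟨i, rfl | rfl | rfl | rfl⟩
      · exact Or.inl (Or.inl ⟨y, by simp [← hy]⟩)
      · exact Or.inl (Or.inr (Or.inl ⟨y, by simp [← hy]⟩))
      · exact Or.inr ⟨i, y, by simp [← hy]⟩
      · exact Or.inl (Or.inr (Or.inr ⟨i, y, Or.inl (by simp [← hy])⟩))
      · exact Or.inl (Or.inr (Or.inr ⟨i, y, Or.inr (Or.inl (by simp [← hy]))⟩))
      · exact Or.inl (Or.inr (Or.inr ⟨i, y, Or.inr (Or.inr (by simp [← hy]))⟩))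
    · rintro ((⟨y, h⟩ | ⟨y, h⟩ | ⟨i, y, h | h | h⟩) | ⟨i, y, h⟩)
      · exact ⟨_, Or.inl rfl, y, by simp [h]⟩
      · exact ⟨_, Or.inr (Or.inl rfl), y, by simp [h]⟩
      · exact ⟨_, Or.inr (Or.inr ⟨i, Or.inr (Or.inl rfl)⟩), y, by simp [h]⟩
      · exact ⟨_, Or.inr (Or.inr ⟨i, Or.inr (Or.inr (Or.inl rfl))⟩), y, by simp [h]⟩
      · exact ⟨_, Or.inr (Or.inr ⟨i, Or.inr (Or.inr (Or.inr rfl))⟩), y, by simp [h]⟩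
      · exact ⟨_, Or.inr (Or.inr ⟨i, Or.inl rfl⟩), y, by simp [h]⟩
  unfold Good
  rw [← not_or, ← not_or, not_iff_not]
  simp only [List.infix_cons_iff, and_or_left, exists_or]
  rw [key]; tauto

theorem Good.of_append_left {n : ℕ} {u v : List (Gen n)} (h : Good n (u ++ v)) : Good n u :=
  fun ⟨w, hw, hi⟩ => h ⟨w, hw, hi.trans (List.infix_append' [] u v)⟩

theorem not_good_R3 {n : ℕ} {i : Fin n} {y : List (Gen n)} :
    ¬ Good n (Gen.c i.succ :: Gen.a i.succ :: Gen.b i.succ :: y) := by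
  rw [good_cons]; intro h; exact h.2.1 ⟨i, y, rfl⟩

theorem not_good_R1 {n : ℕ} {y : List (Gen n)} :
    ¬ Good n (Gen.a (Fin.last n) :: Gen.b (Fin.last n) :: Gen.c (Fin.last n) :: y) := by
  rw [good_cons]; intro h; exact h.1 (Or.inl ⟨y, rfl⟩)

theorem not_good_R2 {n : ℕ} {y : List (Gen n)} :
    ¬ Good n (Gen.c 0 :: Gen.a 0 :: y) := by
  rw [good_cons]; intro h; exact h.1 (Or.inr (Or.inl ⟨y, rfl⟩))

theorem not_good_R4 {n : ℕ} {i : Fin n} {y : List (Gen n)} :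
    ¬ Good n (Gen.b i.succ :: Gen.c i.succ :: Gen.a i.succ :: y) := by
  rw [good_cons]; intro h; exact h.1 (Or.inr (Or.inr ⟨i, y, Or.inl rfl⟩))

theorem not_good_R5 {n : ℕ} {i : Fin n} {y : List (Gen n)} :
    ¬ Good n (Gen.c i.castSucc :: Gen.c i.succ :: y) := by
  rw [good_cons]; intro h; exact h.1 (Or.inr (Or.inr ⟨i, y, Or.inr (Or.inl rfl)⟩))

theorem not_good_R6 {n : ℕ} {i : Fin n} {y : List (Gen n)} :
    ¬ Good n (Gen.b i.succ :: Gen.a i.castSucc :: y) := by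
  rw [good_cons]; intro h; exact h.1 (Or.inr (Or.inr ⟨i, y, Or.inr (Or.inr rfl)⟩))

theorem Good.tail {n : ℕ} {g : Gen n} {l : List (Gen n)} (h : Good n (g :: l)) : Good n l :=
  ((good_cons n g l).1 h).2.2

/-- either `c_i a_i` with `i = 0`, or `b_i c_i a_i`. -/
theorem not_good_bca {n : ℕ} {i : Fin (n+1)} {y : List (Gen n)} :
    ¬ Good n (Gen.b i :: Gen.c i :: Gen.a i :: y) := by
  rcases Fin.eq_zero_or_eq_succ i with rfl | ⟨j, rfl⟩
  · exact fun h => not_good_R2 h.tail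
  · exact not_good_R4

def Rw (n : ℕ) (g : Gen n) (l m : List (Gen n)) : Prop :=
  ∃ i : Fin n, ∃ y, g = Gen.c i.succ ∧ l = Gen.a i.succ :: Gen.b i.succ :: y ∧
    m = Gen.a i.castSucc :: Gen.b i.castSucc :: Gen.c i.castSucc :: y

def Act (n : ℕ) (g : Gen n) (l m : List (Gen n)) : Prop :=
  Good n l ∧ Good n m ∧ (m = g :: l ∨ Rw n g l m)

theorem Act.fun {n : ℕ} {g : Gen n} {l m m' : List (Gen n)} (h : Act n g l m) (h' : Act n g l m') :
    m = m' := by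
  obtain ⟨_, h1, h2⟩ := h
  obtain ⟨_, h1', h2'⟩ := h'
  rcases h2 with rfl | ⟨i, y, rfl, rfl, rfl⟩ <;> rcases h2' with rfl | ⟨i', y', h3, h4, rfl⟩
  · rfl
  · subst h3 h4; exact absurd h1 not_good_R3
  · exact absurd h1' not_good_R3
  · simp only [Gen.c.injEq, Fin.succ_inj] at h3
    subst h3
    simp at h4
    rw [h4]

open Classical in
noncomputable def act (n : ℕ) (g : Gen n) (l : List (Gen n)) : Option (List (Gen n)) :=
  if h : ∃ m, Act n g l m then some h.choose else none

theorem act_iff {n : ℕ} {g : Gen n} {l m : List (Gen n)} : act n g l = some m ↔ Act n g l m := by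
  unfold act
  split_ifs with h
  · simp only [Option.some.injEq]
    exact ⟨fun e => e ▸ h.choose_spec, fun e => h.choose_spec.fun e⟩
  · simp only [reduceCtorEq, false_iff]; exact fun e => h ⟨m, e⟩

theorem act_a {n : ℕ} {i} {l m : List (Gen n)} :
    act n (Gen.a i) l = some m ↔ Good n m ∧ m = Gen.a i :: l := by
  rw [act_iff]; unfold Act Rw
  constructor
  · rintro ⟨h, h', rfl | ⟨_, _, h, _⟩⟩
    · exact ⟨h', rfl⟩
    · cases h
  · rintro ⟨h, rfl⟩; exact ⟨h.tail, h, Or.inl rfl⟩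

theorem act_b {n : ℕ} {i} {l m : List (Gen n)} :
    act n (Gen.b i) l = some m ↔ Good n m ∧ m = Gen.b i :: l := by
  rw [act_iff]; unfold Act Rw
  constructor
  · rintro ⟨h, h', rfl | ⟨_, _, h, _⟩⟩
    · exact ⟨h', rfl⟩
    · cases h
  · rintro ⟨h, rfl⟩; exact ⟨h.tail, h, Or.inl rfl⟩

theorem act_c {n : ℕ} {i} {l m : List (Gen n)} :
    act n (Gen.c i) l = some m ↔ Good n l ∧ Good n m ∧ (m = Gen.c i :: l ∨
      ∃ j : Fin n, ∃ y, i = j.succ ∧ l = Gen.a j.succ :: Gen.b j.succ :: y ∧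
        m = Gen.a j.castSucc :: Gen.b j.castSucc :: Gen.c j.castSucc :: y) := by
  rw [act_iff]; unfold Act Rw
  simp

theorem act_good {n : ℕ} {g : Gen n} {l : List (Gen n)} (h : Good n (g :: l)) :
    act n g l = some (g :: l) := act_iff.2 ⟨h.tail, h, Or.inl rfl⟩

/-- composite action of a word -/
noncomputable def actW (n : ℕ) : List (Gen n) → Option (List (Gen n)) → Option (List (Gen n))
  | [], o => o
  | g :: w, o => (actW n w o).bind (act n g)

theorem rel1 (n : ℕ) (l : List (Gen n)) :
    actW n [Gen.a (Fin.last n), Gen.b (Fin.last n), Gen.c (Fin.last n)] (some l) = none := by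
  rw [Option.eq_none_iff_forall_ne_some]
  intro m hm
  simp only [actW, Option.bind_some, Option.bind_eq_some_iff, act_a, act_b, act_c] at hm
  obtain ⟨_, ⟨_, ⟨_, h1, h2⟩, h3, rfl⟩, h4, rfl⟩ := hm
  rcases h2 with rfl | ⟨j, y, h5, rfl, rfl⟩
  · exact not_good_R1 h4
  · rw [h5] at h3; exact not_good_R6 h3

theorem rel2 (n : ℕ) (l : List (Gen n)) :
    actW n [Gen.c 0, Gen.a 0] (some l) = none := by
  rw [Option.eq_none_iff_forall_ne_some]
  intro m hm
  simp only [actW, Option.bind_some, Option.bind_eq_some_iff, act_a, act_b, act_c] at hm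
  obtain ⟨_, ⟨h1, rfl⟩, _, h3, rfl | ⟨j, y, h5, _⟩⟩ := hm
  · exact not_good_R2 h3
  · exact (Fin.succ_ne_zero j h5.symm)

theorem good_imp {n : ℕ} {i : Fin n} {l : List (Gen n)}
    (h : Good n (Gen.a i.castSucc :: Gen.b i.castSucc :: Gen.c i.castSucc :: l)) :
    Good n (Gen.a i.succ :: Gen.b i.succ :: l) := by
  have hc : ∀ y, l ≠ Gen.c i.succ :: y := by
    rintro y rfl; exact not_good_R5 h.tail.tail
  have ha : ∀ y, l ≠ Gen.a i.castSucc :: y := by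
    rintro y rfl; exact not_good_bca h.tail
  rw [good_cons, good_cons]
  refine ⟨?_, ?_, ?_, ?_, h.tail.tail.tail⟩
  · rintro (⟨y, h⟩ | ⟨y, h⟩ | ⟨j, y, h | h | h⟩) <;> simp at h
    rename_i hh
    first
      | (obtain ⟨h1, _, h2⟩ := h; exact hc y (by rw [h2, h1]))
      | (obtain ⟨h1, h2⟩ := h; exact hc y (by rw [h2, h1]))
  · rintro ⟨j, y, h⟩; simp at h
  · rintro (⟨y, h⟩ | ⟨y, h⟩ | ⟨j, y, h | h | h⟩) <;> simp at h
    · obtain ⟨rfl, h2⟩ := h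
      exact hc _ h2
    · obtain ⟨rfl, h2⟩ := h
      exact ha _ h2
  · rintro ⟨j, y, h⟩; simp at h

theorem rel3 (n : ℕ) (i : Fin n) (l : List (Gen n)) :
    actW n [Gen.c i.succ, Gen.a i.succ, Gen.b i.succ] (some l) =
    actW n [Gen.a i.castSucc, Gen.b i.castSucc, Gen.c i.castSucc] (some l) := by
  ext m
  simp only [actW, Option.bind_some, Option.bind_eq_some_iff, act_a, act_b, act_c]
  trans Good n m ∧ m = Gen.a i.castSucc :: Gen.b i.castSucc :: Gen.c i.castSucc :: l
  · constructor
    · rintro ⟨_, ⟨_, ⟨h1, rfl⟩, h2, rfl⟩, _, h3, rfl | ⟨j, y, h4, h5, rfl⟩⟩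
      · exact absurd h3 not_good_R3
      · simp at h4; subst h4; simp at h5; subst h5; exact ⟨h3, rfl⟩
    · rintro ⟨h, rfl⟩
      have h' := good_imp h
      exact ⟨_, ⟨_, ⟨h'.tail, rfl⟩, h', rfl⟩, h', h, Or.inr ⟨i, l, rfl, rfl, rfl⟩⟩
  · constructor
    · rintro ⟨h, rfl⟩
      exact ⟨_, ⟨_, ⟨h.tail.tail.tail, h.tail.tail, Or.inl rfl⟩, h.tail, rfl⟩, h, rfl⟩
    · rintro ⟨_, ⟨_, ⟨_, h1, h2⟩, h3, rfl⟩, h4, rfl⟩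
      rcases h2 with rfl | ⟨j, y, h5, rfl, rfl⟩
      · exact ⟨h4, rfl⟩
      · rw [h5] at h3; exact absurd h3 not_good_R6

theorem rel4 (n : ℕ) (i : Fin n) (l : List (Gen n)) :
    actW n [Gen.b i.succ, Gen.c i.succ, Gen.a i.succ] (some l) = none := by
  rw [Option.eq_none_iff_forall_ne_some]
  intro m hm
  simp only [actW, Option.bind_some, Option.bind_eq_some_iff, act_a, act_b, act_c] at hm
  obtain ⟨_, ⟨_, ⟨h1, rfl⟩, _, h3, rfl | ⟨j, y, h5, _, rfl⟩⟩, h6, rfl⟩ := hm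
  · exact not_good_R4 h6
  · rw [h5] at h6; exact not_good_R6 h6

theorem rel5 (n : ℕ) (i : Fin n) (l : List (Gen n)) :
    actW n [Gen.c i.castSucc, Gen.c i.succ] (some l) = none := by
  rw [Option.eq_none_iff_forall_ne_some]
  intro m hm
  simp only [actW, Option.bind_some, Option.bind_eq_some_iff, act_c] at hm
  obtain ⟨_, ⟨h1, h2, rfl | ⟨j, y, h5, rfl, rfl⟩⟩, _, h3, rfl | ⟨j', y', h6, h7, rfl⟩⟩ := hm
  · exact not_good_R5 h3
  · simp at h7
  · simp at h5; subst h5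
    rcases Fin.eq_zero_or_eq_succ i.castSucc with h0 | ⟨j, h0⟩
    · rw [h0] at h3; exact not_good_R2 h3
    · rw [h0] at h3; exact not_good_R3 h3
  · simp at h5; subst h5
    rw [h6] at h7
    simp at h7
    subst h7
    exact not_good_R5 h3.tail.tail

theorem rel6 (n : ℕ) (i : Fin n) (l : List (Gen n)) :
    actW n [Gen.b i.succ, Gen.a i.castSucc] (some l) = none := by
  rw [Option.eq_none_iff_forall_ne_some]
  intro m hm
  simp only [actW, Option.bind_some, Option.bind_eq_some_iff, act_a, act_b] at hm
  obtain ⟨_, ⟨h1, rfl⟩, h2, rfl⟩ := hm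
  exact not_good_R6 h2

/-! Linear representation -/

noncomputable def toV (K : Type) [Field K] (n : ℕ) : Option (List (Gen n)) → (List (Gen n) →₀ K)
  | none => 0
  | some l => Finsupp.single l 1

def sg (K : Type) [Field K] (n : ℕ) : Gen n → K
  | Gen.a i => (-1) ^ (i : ℕ)
  | _ => 1

noncomputable def TT (K : Type) [Field K] (n : ℕ) (g : Gen n) :
    Module.End K (List (Gen n) →₀ K) :=
  Finsupp.linearCombination K (fun l => sg K n g • toV K n (act n g l))

theorem TT_toV (K : Type) [Field K] (n : ℕ) (g : Gen n) (o : Option (List (Gen n))) :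
    TT K n g (toV K n o) = sg K n g • toV K n (o.bind (act n g)) := by
  cases o <;> simp [toV, TT]

noncomputable def Φ (K : Type) [Field K] (n : ℕ) :
    FA K n →ₐ[K] Module.End K (List (Gen n) →₀ K) := FreeAlgebra.lift K (TT K n)

theorem Φ_word (K : Type) [Field K] (n : ℕ) (w : List (Gen n)) (o : Option (List (Gen n))) :
    Φ K n (word K n w) (toV K n o) = (w.map (sg K n)).prod • toV K n (actW n w o) := by
  induction w with
  | nil => simp [word, actW]
  | cons g w ih =>
    have : word K n (g :: w) = FreeAlgebra.ι K g * word K n w := by simp [word]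
    rw [this, map_mul, Module.End.mul_apply, ih, map_smul]
    have : Φ K n (FreeAlgebra.ι K g) = TT K n g := by simp [Φ]
    rw [this, TT_toV, smul_smul]
    simp [actW, mul_comm]

theorem Φ_word_zero (K : Type) [Field K] (n : ℕ) (w : List (Gen n))
    (h : ∀ l, actW n w (some l) = none) : Φ K n (word K n w) = 0 := by
  apply Finsupp.lhom_ext'
  intro l
  ext1
  have := Φ_word K n w (some l)
  rw [h] at this
  simpa [toV] using this

theorem ga_eq (K : Type) [Field K] (n : ℕ) (j : Fin (n+1)) (z : ℤ) (h : z = (j : ℕ)) :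
    ga K n z = FreeAlgebra.ι K (Gen.a j) := by
  subst h
  have := j.2
  unfold ga
  rw [dif_pos (by omega)]
  simp

theorem gb_eq (K : Type) [Field K] (n : ℕ) (j : Fin (n+1)) (z : ℤ) (h : z = (j : ℕ)) :
    gb K n z = FreeAlgebra.ι K (Gen.b j) := by
  subst h
  have := j.2
  unfold gb
  rw [dif_pos (by omega)]
  simp

theorem gc_eq (K : Type) [Field K] (n : ℕ) (j : Fin (n+1)) (z : ℤ) (h : z = (j : ℕ)) :
    gc K n z = FreeAlgebra.ι K (Gen.c j) := by
  subst h
  have := j.2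
  unfold gc
  rw [dif_pos (by omega)]
  simp

theorem rels_iff (K : Type) [Field K] (n : ℕ) (x : FA K n) : x ∈ rels K n ↔
    x = word K n [Gen.a (Fin.last n), Gen.b (Fin.last n), Gen.c (Fin.last n)] ∨
    x = word K n [Gen.c 0, Gen.a 0] ∨
    ∃ i : Fin n,
      x = word K n [Gen.a i.castSucc, Gen.b i.castSucc, Gen.c i.castSucc] +
        word K n [Gen.c i.succ, Gen.a i.succ, Gen.b i.succ] ∨
      x = word K n [Gen.b i.succ, Gen.c i.succ, Gen.a i.succ] ∨
      x = word K n [Gen.c i.castSucc, Gen.c i.succ] ∨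
      x = word K n [Gen.b i.succ, Gen.a i.castSucc] := by
  unfold rels
  simp only [Set.mem_setOf_eq, word, List.map_cons, List.map_nil, List.prod_cons, List.prod_nil,
    mul_one, ← mul_assoc]
  rw [ga_eq K n (Fin.last n) n (by simp), gb_eq K n (Fin.last n) n (by simp),
    gc_eq K n (Fin.last n) n (by simp), ga_eq K n 0 0 (by simp), gc_eq K n 0 0 (by simp)]
  refine or_congr Iff.rfl (or_congr Iff.rfl ?_)
  have e : ∀ i : Fin n, ga K n (i : ℕ) = FreeAlgebra.ι K (Gen.a i.castSucc) ∧
      gb K n (i : ℕ) = FreeAlgebra.ι K (Gen.b i.castSucc) ∧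
      gc K n (i : ℕ) = FreeAlgebra.ι K (Gen.c i.castSucc) ∧
      ga K n ((i : ℕ) + 1) = FreeAlgebra.ι K (Gen.a i.succ) ∧
      gb K n ((i : ℕ) + 1) = FreeAlgebra.ι K (Gen.b i.succ) ∧
      gc K n ((i : ℕ) + 1) = FreeAlgebra.ι K (Gen.c i.succ) := by
    intro i
    exact ⟨ga_eq _ _ _ _ (by simp), gb_eq _ _ _ _ (by simp), gc_eq _ _ _ _ (by simp),
      ga_eq _ _ _ _ (by simp), gb_eq _ _ _ _ (by simp), gc_eq _ _ _ _ (by simp)⟩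
  constructor
  · rintro ⟨i, hi, h⟩
    refine ⟨⟨i, hi⟩, ?_⟩
    obtain ⟨e1, e2, e3, e4, e5, e6⟩ := e ⟨i, hi⟩
    simp only at e1 e2 e3 e4 e5 e6
    rw [e1, e2, e3, e4, e5, e6] at h
    exact h
  · rintro ⟨i, h⟩
    refine ⟨i, i.2, ?_⟩
    obtain ⟨e1, e2, e3, e4, e5, e6⟩ := e i
    rw [e1, e2, e3, e4, e5, e6]
    exact h

theorem Φ_rels (K : Type) [Field K] (n : ℕ) (x : FA K n) (hx : x ∈ rels K n) : Φ K n x = 0 := by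
  rw [rels_iff] at hx
  rcases hx with rfl | rfl | ⟨i, rfl | rfl | rfl | rfl⟩
  · exact Φ_word_zero K n _ (rel1 n)
  · exact Φ_word_zero K n _ (rel2 n)
  · apply Finsupp.lhom_ext'
    intro l
    ext1
    have h1 := Φ_word K n [Gen.a i.castSucc, Gen.b i.castSucc, Gen.c i.castSucc] (some l)
    have h2 := Φ_word K n [Gen.c i.succ, Gen.a i.succ, Gen.b i.succ] (some l)
    rw [rel3] at h2
    simp only [toV] at h1 h2
    simp only [map_add, LinearMap.add_comp, LinearMap.add_apply, LinearMap.comp_apply,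
      Finsupp.lsingle_apply, h1, h2]
    simp [sg, pow_succ]
  · exact Φ_word_zero K n _ (rel4 n i)
  · exact Φ_word_zero K n _ (rel5 n i)
  · exact Φ_word_zero K n _ (rel6 n i)

noncomputable def Ψ (K : Type) [Field K] (n : ℕ) :
    B K n →ₐ[K] Module.End K (List (Gen n) →₀ K) :=
  RingQuot.liftAlgHom K ⟨Φ K n, by
    rintro x y ⟨hx, rfl⟩
    rw [Φ_rels K n x hx, map_zero]⟩

theorem Ψ_π (K : Type) [Field K] (n : ℕ) (x : FA K n) : Ψ K n (πB K n x) = Φ K n x := by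
  simp [Ψ, πB]

theorem π_rels (K : Type) [Field K] (n : ℕ) (x : FA K n) (hx : x ∈ rels K n) : πB K n x = 0 := by
  have : πB K n x = πB K n 0 := RingQuot.mkAlgHom_rel K (show BRel K n x 0 from ⟨hx, rfl⟩)
  rw [this, map_zero]

theorem word_append (K : Type) [Field K] (n : ℕ) (u v : List (Gen n)) :
    word K n (u ++ v) = word K n u * word K n v := by simp [word]

theorem π_app_left (K : Type) [Field K] (n : ℕ) (u v : List (Gen n))
    (h : πB K n (word K n u) = 0) : πB K n (word K n (u ++ v)) = 0 := by
  rw [word_append, map_mul, h, zero_mul]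

theorem π_cons (K : Type) [Field K] (n : ℕ) (g : Gen n) (v : List (Gen n))
    (h : πB K n (word K n v) = 0) : πB K n (word K n (g :: v)) = 0 := by
  have := word_append K n [g] v
  rw [List.singleton_append] at this
  rw [this, map_mul, h, mul_zero]

theorem π_ZH (K : Type) [Field K] (n : ℕ) (l : List (Gen n)) (h : ZH n l) :
    πB K n (word K n l) = 0 := by
  rcases h with ⟨y, rfl⟩ | ⟨y, rfl⟩ | ⟨i, y, rfl | rfl | rfl⟩
  · exact π_app_left K n [_, _, _] y (π_rels K n _ ((rels_iff K n _).2 (Or.inl rfl)))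
  · exact π_app_left K n [_, _] y (π_rels K n _ ((rels_iff K n _).2 (Or.inr (Or.inl rfl))))
  · exact π_app_left K n [_, _, _] y (π_rels K n _ ((rels_iff K n _).2
      (Or.inr (Or.inr ⟨i, Or.inr (Or.inl rfl)⟩))))
  · exact π_app_left K n [_, _] y (π_rels K n _ ((rels_iff K n _).2
      (Or.inr (Or.inr ⟨i, Or.inr (Or.inr (Or.inl rfl))⟩))))
  · exact π_app_left K n [_, _] y (π_rels K n _ ((rels_iff K n _).2
      (Or.inr (Or.inr ⟨i, Or.inr (Or.inr (Or.inr rfl))⟩))))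

theorem π_bca (K : Type) [Field K] (n : ℕ) (i : Fin (n+1)) (y : List (Gen n)) :
    πB K n (word K n (Gen.b i :: Gen.c i :: Gen.a i :: y)) = 0 := by
  rcases Fin.eq_zero_or_eq_succ i with rfl | ⟨j, rfl⟩
  · exact π_cons _ _ _ _ (π_ZH _ _ _ (Or.inr (Or.inl ⟨y, rfl⟩)))
  · exact π_ZH _ _ _ (Or.inr (Or.inr ⟨j, y, Or.inl rfl⟩))

theorem π_R3 (K : Type) [Field K] (n : ℕ) (i : Fin n) (y : List (Gen n)) :
    πB K n (word K n (Gen.c i.succ :: Gen.a i.succ :: Gen.b i.succ :: y)) =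
    (-1 : K) • πB K n (word K n (Gen.a i.castSucc :: Gen.b i.castSucc :: Gen.c i.castSucc :: y)) := by
  have h := π_rels K n _ ((rels_iff K n _).2 (Or.inr (Or.inr ⟨i, Or.inl rfl⟩)))
  have h1 := word_append K n [Gen.c i.succ, Gen.a i.succ, Gen.b i.succ] y
  have h2 := word_append K n [Gen.a i.castSucc, Gen.b i.castSucc, Gen.c i.castSucc] y
  simp only [List.cons_append, List.nil_append] at h1 h2
  rw [map_add] at h
  have h3 := congrArg (fun z => z + (-1 : K) •
    πB K n (word K n [Gen.a i.castSucc, Gen.b i.castSucc, Gen.c i.castSucc])) h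
  simp only [zero_add] at h3
  rw [h1, h2, map_mul, map_mul, ← smul_mul_assoc, ← h3]
  congr 1
  rw [add_right_comm]
  have h4 : ∀ z : B K n, z + (-1 : K) • z = 0 := by
    intro z
    calc z + (-1 : K) • z = (1 + (-1) : K) • z := by rw [add_smul, one_smul]
      _ = 0 := by simp
  rw [h4, zero_add]

theorem π_bad (K : Type) [Field K] (n : ℕ) (i : Fin n) (y : List (Gen n)) (hy : Good n y)
    (h : ¬ Good n (Gen.a i.castSucc :: Gen.b i.castSucc :: Gen.c i.castSucc :: y)) :
    πB K n (word K n (Gen.a i.castSucc :: Gen.b i.castSucc :: Gen.c i.castSucc :: y)) = 0 := by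
  rw [good_cons, good_cons, good_cons] at h
  by_cases h1 : ZH n (Gen.a i.castSucc :: Gen.b i.castSucc :: Gen.c i.castSucc :: y)
  · exact π_ZH _ _ _ h1
  by_cases h2 : ZH n (Gen.b i.castSucc :: Gen.c i.castSucc :: y)
  · exact π_cons _ _ _ _ (π_ZH _ _ _ h2)
  by_cases h3 : ZH n (Gen.c i.castSucc :: y)
  · exact π_cons _ _ _ _ (π_cons _ _ _ _ (π_ZH _ _ _ h3))
  by_cases h4 : RH n (Gen.c i.castSucc :: y)
  · obtain ⟨j, z, h5⟩ := h4
    simp only [List.cons.injEq, Gen.c.injEq] at h5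
    obtain ⟨h5, rfl⟩ := h5
    rw [h5]
    exact π_cons _ _ _ _ (π_bca _ _ _ _)
  · exfalso
    refine h ⟨h1, ?_, h2, ?_, h3, h4, hy⟩ <;> rintro ⟨j, z, h5⟩ <;> simp at h5

theorem act_none (K : Type) [Field K] (n : ℕ) (g : Gen n) (l : List (Gen n)) (hl : Good n l)
    (h : act n g l = none) : πB K n (word K n (g :: l)) = 0 := by
  have hn : ∀ m, ¬ Act n g l m := by
    intro m hm; rw [act_iff.2 hm] at h; cases h
  by_cases hz : ZH n (g :: l)
  · exact π_ZH _ _ _ hz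
  by_cases hr : RH n (g :: l)
  · obtain ⟨i, y, h5⟩ := hr
    simp only [List.cons.injEq] at h5
    obtain ⟨rfl, rfl⟩ := h5
    rw [π_R3, π_bad K n i y hl.tail.tail, smul_zero]
    intro hg
    exact hn _ ⟨hl, hg, Or.inr ⟨i, y, rfl, rfl, rfl⟩⟩
  · exact absurd ⟨hl, (good_cons _ _ _).2 ⟨hz, hr, hl⟩, Or.inl rfl⟩ (hn (g :: l))

theorem act_some (K : Type) [Field K] (n : ℕ) (g : Gen n) (l m : List (Gen n))
    (h : act n g l = some m) (hm : πB K n (word K n m) = 0) : πB K n (word K n (g :: l)) = 0 := by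
  obtain ⟨_, _, rfl | ⟨i, y, rfl, rfl, rfl⟩⟩ := act_iff.1 h
  · exact hm
  · rw [π_R3, hm, smul_zero]

theorem act_rel (K : Type) [Field K] (n : ℕ) (g : Gen n) (l m : List (Gen n))
    (h : act n g l = some m) :
    πB K n (word K n (g :: l)) = πB K n (word K n m) ∨
    πB K n (word K n (g :: l)) = (-1 : K) • πB K n (word K n m) := by
  obtain ⟨_, _, rfl | ⟨i, y, rfl, rfl, rfl⟩⟩ := act_iff.1 h
  · exact Or.inl rfl
  · exact Or.inr (π_R3 _ _ _ _)

theorem nf_spec (K : Type) [Field K] (n : ℕ) (l : List (Gen n)) :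
    (actW n l (some []) = none → πB K n (word K n l) = 0) ∧
    ∀ m, actW n l (some []) = some m → Good n m ∧
      (πB K n (word K n l) = πB K n (word K n m) ∨
       πB K n (word K n l) = (-1 : K) • πB K n (word K n m)) := by
  induction l with
  | nil =>
    refine ⟨by simp [actW], ?_⟩
    intro m hm
    simp only [actW, Option.some.injEq] at hm
    subst hm
    exact ⟨good_nil n, Or.inl rfl⟩
  | cons g l ih =>
    have e : word K n (g :: l) = word K n [g] * word K n l := word_append K n [g] l
    simp only [actW]
    cases hl : actW n l (some []) with
    | none => exact ⟨fun _ => π_cons _ _ _ _ (ih.1 hl), by simp⟩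
    | some m' =>
      obtain ⟨hg, hp⟩ := ih.2 m' hl
      have e' : word K n (g :: m') = word K n [g] * word K n m' := word_append K n [g] m'
      have hp' : πB K n (word K n (g :: l)) = πB K n (word K n (g :: m')) ∨
          πB K n (word K n (g :: l)) = (-1 : K) • πB K n (word K n (g :: m')) := by
        rw [e, e', map_mul, map_mul]
        rcases hp with hp | hp <;> rw [hp]
        · exact Or.inl rfl
        · exact Or.inr (by rw [mul_smul_comm])
      constructor
      · intro h
        simp only [Option.bind_some] at h
        have := act_none K n g m' hg h
        rw [this] at hp'
        simpa using hp'
      · intro m hm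
        simp only [Option.bind_some] at hm
        refine ⟨(act_iff.1 hm).2.1, ?_⟩
        rcases hp' with h1 | h1 <;> rcases act_rel K n g m' m hm with h2 | h2 <;>
          rw [h1, h2]
        · exact Or.inl rfl
        · exact Or.inr rfl
        · exact Or.inr rfl
        · exact Or.inl (by rw [smul_smul]; simp)

theorem actW_good {n : ℕ} {l : List (Gen n)} (h : Good n l) : actW n l (some []) = some l := by
  induction l with
  | nil => rfl
  | cons g l ih => simp [actW, ih h.tail, act_good h]

/-- shape of the normal form of a product of good words -/
theorem nf_shape {n : ℕ} (x : List (Gen n)) (hx : Good n x) (w : List (Gen n)) (hw : Good n w)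
    (m : List (Gen n)) (hm : actW n (w ++ x) (some []) = some m) :
    m = w ++ x ∨ ∃ (u : List (Gen n)) (i : Fin n) (y : List (Gen n)),
      m = u ++ Gen.a i.castSucc :: Gen.b i.castSucc :: Gen.c i.castSucc :: y ∧
      ((w = u ++ [Gen.c i.succ] ∧ x = Gen.a i.succ :: Gen.b i.succ :: y) ∨
       (w = u ++ [Gen.c i.succ, Gen.a i.succ] ∧ x = Gen.b i.succ :: y)) := by
  induction w generalizing m with
  | nil =>
    left
    rw [List.nil_append, actW_good hx] at hm
    simpa using hm.symm
  | cons g w ih =>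
    simp only [List.cons_append, actW, Option.bind_eq_some_iff] at hm
    obtain ⟨m', h1, h2⟩ := hm
    obtain ⟨_, hgm, h3⟩ := act_iff.1 h2
    rcases ih hw.tail m' h1 with rfl | ⟨u, i, y, rfl, h4⟩
    · rcases h3 with rfl | ⟨i, y, rfl, h5, rfl⟩
      · left; rfl
      · right
        refine ⟨[], i, y, rfl, ?_⟩
        match w, hw, h5 with
        | [], _, h5 => left; exact ⟨rfl, h5⟩
        | [_], _, h5 => right; simp at h5; simp [h5]
        | _ :: _ :: _, hw, h5 =>
          simp at h5
          rw [h5.1, h5.2.1] at hw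
          exact absurd hw not_good_R3
    · right
      rcases h3 with rfl | ⟨j, z, rfl, h5, rfl⟩
      · refine ⟨g :: u, i, y, rfl, ?_⟩
        rcases h4 with ⟨rfl, rfl⟩ | ⟨rfl, rfl⟩ <;> simp
      · exfalso
        match u, h4, h5 with
        | [], h4, h5 =>
          simp at h5
          rw [← h5.1] at hw
          rcases h4 with ⟨rfl, rfl⟩ | ⟨rfl, rfl⟩ <;> exact not_good_R5 hw
        | [_], h4, h5 => simp at h5
        | _ :: _ :: _, h4, h5 =>
          simp at h5
          rw [h5.1, h5.2.1] at h4
          rcases h4 with ⟨rfl, rfl⟩ | ⟨rfl, rfl⟩ <;> exact not_good_R3 hw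

theorem aux_ne {n : ℕ} (x w u : List (Gen n)) (i : Fin n) (y : List (Gen n)) (v : List (Gen n))
    (h : (v = u ++ [Gen.c i.succ] ∧ x = Gen.a i.succ :: Gen.b i.succ :: y) ∨
       (v = u ++ [Gen.c i.succ, Gen.a i.succ] ∧ x = Gen.b i.succ :: y))
    (hlen : w.length = v.length)
    (e : w ++ x = u ++ Gen.a i.castSucc :: Gen.b i.castSucc :: Gen.c i.castSucc :: y) : False := by
  rcases h with ⟨rfl, rfl⟩ | ⟨rfl, rfl⟩
  · have e' : w ++ (Gen.a i.succ :: Gen.b i.succ :: y) =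
      (u ++ [Gen.a i.castSucc]) ++ (Gen.b i.castSucc :: Gen.c i.castSucc :: y) := by simp [e]
    have := (List.append_inj e' (by simpa using hlen)).2
    simp at this
  · have e' : w ++ (Gen.b i.succ :: y) =
      (u ++ [Gen.a i.castSucc, Gen.b i.castSucc]) ++ (Gen.c i.castSucc :: y) := by simp [e]
    have := (List.append_inj e' (by simpa using hlen)).2
    simp at this

theorem nf_inj {n : ℕ} (x : List (Gen n)) (hx : Good n x) (w v : List (Gen n)) (hw : Good n w)
    (hv : Good n v) (hlen : w.length = v.length)
    (m : List (Gen n)) (h1 : actW n (w ++ x) (some []) = some m)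
    (h2 : actW n (v ++ x) (some []) = some m) : w = v := by
  rcases nf_shape x hx w hw m h1 with e | ⟨u, i, y, e, h⟩ <;>
  rcases nf_shape x hx v hv m h2 with e' | ⟨u', i', y', e', h'⟩
  · exact List.append_cancel_right (e.symm.trans e')
  · exact (aux_ne x w u' i' y' v h' hlen (e.symm.trans e')).elim
  · exact (aux_ne x v u i y w h hlen.symm (e'.symm.trans e)).elim
  · have ee := e.symm.trans e'
    rcases h with ⟨rfl, rfl⟩ | ⟨rfl, rfl⟩ <;> rcases h' with ⟨rfl, hh⟩ | ⟨rfl, hh⟩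
    · simp at hh hlen
      obtain ⟨rfl, rfl⟩ := hh
      rw [(List.append_inj ee hlen).1]
    · simp at hh
    · simp at hh
    · simp at hh hlen
      obtain ⟨rfl, rfl⟩ := hh
      rw [(List.append_inj ee hlen).1]

theorem sg_ne (K : Type) [Field K] (n : ℕ) (l : List (Gen n)) : (l.map (sg K n)).prod ≠ 0 := by
  induction l with
  | nil => simp
  | cons g l ih =>
    simp only [List.map_cons, List.prod_cons]
    refine mul_ne_zero ?_ ih
    cases g <;> simp [sg]

end Aux

/-- Proposition 2.3. Let `x = π_B(x̂)` be a nonzero monomial, with `x̂` the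
canonical (good) pure tensor lifting it.  Let `w` be a homogeneous element of degree `d` of
the left annihilator of `x`, with canonical lift `ŵ = Σ_t α_t w_t`, where the `w_t` are
distinct good pure tensors of degree `d` and `α_t ≠ 0`.  Then `π_B(w_t x̂) = 0` for all `t`. -/
theorem stmt_1 (K : Type) [Field K] (n : ℕ)
    (xh : List (Gen n)) (hx_good : Good n xh) (hx_ne : πB K n (word K n xh) ≠ 0)
    (d k : ℕ) (w : Fin k → List (Gen n)) (hw_inj : Function.Injective w)
    (hw_good : ∀ t, Good n (w t)) (hw_deg : ∀ t, (w t).length = d)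
    (α : Fin k → K) (hα : ∀ t, α t ≠ 0)
    (hann : (∑ t, α t • πB K n (word K n (w t))) * πB K n (word K n xh) = 0) :
    ∀ t, πB K n (word K n (w t ++ xh)) = 0 := by
  intro t
  have nf := nf_spec K n (w t ++ xh)
  cases hm : actW n (w t ++ xh) (some []) with
  | none => exact nf.1 hm
  | some m =>
    exfalso
    have h0 : πB K n (∑ s, α s • word K n (w s ++ xh)) = 0 := by
      rw [← hann, Finset.sum_mul, map_sum]
      refine Finset.sum_congr rfl fun s _ => ?_
      rw [map_smul, word_append, map_mul, smul_mul_assoc]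
    have h1 := Ψ_π K n (∑ s, α s • word K n (w s ++ xh))
    rw [h0, map_zero] at h1
    have h2 := congrArg (fun f => f (toV K n (some [])) m) h1
    simp only [map_sum, map_smul, LinearMap.sum_apply, LinearMap.smul_apply, Φ_word,
      LinearMap.zero_apply, Finsupp.coe_zero, Pi.zero_apply, Finsupp.coe_finset_sum,
      Finset.sum_apply, Finsupp.smul_apply] at h2
    rw [Finset.sum_eq_single t] at h2
    · rw [hm] at h2
      simp only [toV, Finsupp.single_eq_same, smul_eq_mul, mul_one] at h2
      exact mul_ne_zero (hα t) (sg_ne K n _) h2.symm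
    · intro s _ hs
      cases hs' : actW n (w s ++ xh) (some []) with
      | none => simp [toV]
      | some m' =>
        have : m' ≠ m := by
          rintro rfl
          exact hs (hw_inj (nf_inj xh hx_good _ _ (hw_good s) (hw_good t)
            ((hw_deg s).trans (hw_deg t).symm) _ hs' hm))
        simp [toV, Finsupp.single_apply, this]
    · simp
end

section
/- For every i with 1 ≤ i ≤ n−1, the following equalities of left ideals of B hold: l.ann_B(b_i c_i) = B c_i a_i, l.ann_B(a_i) = B b_i c_i + B b_{i+1}, and l.ann_B(c_i a_i) = B b_i + B c_{i−1}. -/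
namespace Aux

inductive L : Type
  | a : ℤ → L
  | b : ℤ → L
  | c : ℤ → L

abbrev N (K : Type) [Field K] := List L →₀ K

open Classical in
noncomputable def wA (K : Type) [Field K] (i : ℤ) (w : List L) : N K :=
  if w.take 1 = [L.b (i+1)] ∨ w.take 2 = [L.c i, L.b i] ∨ (i = 0 ∧ w.take 1 = [L.c 0]) then 0
  else Finsupp.single (L.a i :: w) 1

noncomputable def wB (K : Type) [Field K] (i : ℤ) (w : List L) : N K :=
  Finsupp.single (L.b i :: w) 1

open Classical in
noncomputable def wC (K : Type) [Field K] (n : ℕ) (i : ℤ) (w : List L) : N K :=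
  if w.take 1 = [L.c (i-1)] then 0
  else if w.take 2 = [L.b i, L.a i] then
    (if i = n ∨ (w.drop 2).take 1 = [L.c i] then 0
     else - Finsupp.single (L.b (i+1) :: L.a (i+1) :: L.c (i+1) :: w.drop 2) 1)
  else Finsupp.single (L.c i :: w) 1

noncomputable def ext (K : Type) [Field K] {M : Type} [AddCommGroup M] [Module K M]
    (f : List L → M) : N K →ₗ[K] M := Finsupp.linearCombination K f

theorem ext_single (K : Type) [Field K] {M : Type} [AddCommGroup M] [Module K M]
    (f : List L → M) (w : List L) : ext K f (Finsupp.single w 1) = f w := by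
  simp [ext]

noncomputable def act (K : Type) [Field K] (n : ℕ) : Gen n → (Module.End K (N K))ᵐᵒᵖ
  | Gen.a i => MulOpposite.op (ext K (wA K (i.val : ℤ)))
  | Gen.b i => MulOpposite.op (ext K (wB K (i.val : ℤ)))
  | Gen.c i => MulOpposite.op (ext K (wC K n (i.val : ℤ)))

noncomputable def liftF (K : Type) [Field K] (n : ℕ) :
    FA K n →ₐ[K] (Module.End K (N K))ᵐᵒᵖ := FreeAlgebra.lift K (act K n)

theorem lift_ga (K : Type) [Field K] (n : ℕ) (i : ℤ) (h0 : 0 ≤ i) (h1 : i ≤ n) :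
    liftF K n (ga K n i) = MulOpposite.op (ext K (wA K i)) := by
  simp [liftF, ga, h0, h1, act]

theorem lift_gb (K : Type) [Field K] (n : ℕ) (i : ℤ) (h0 : 0 ≤ i) (h1 : i ≤ n) :
    liftF K n (gb K n i) = MulOpposite.op (ext K (wB K i)) := by
  simp [liftF, gb, h0, h1, act]

theorem lift_gc (K : Type) [Field K] (n : ℕ) (i : ℤ) (h0 : 0 ≤ i) (h1 : i ≤ n) :
    liftF K n (gc K n i) = MulOpposite.op (ext K (wC K n i)) := by
  simp [liftF, gc, h0, h1, act]

theorem end_zero (K : Type) [Field K] (T : (Module.End K (N K))ᵐᵒᵖ)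
    (h : ∀ w, T.unop (Finsupp.single w 1) = 0) : T = 0 := by
  apply MulOpposite.unop_injective
  apply Finsupp.lhom_ext'
  intro w
  ext1
  simpa using h w

theorem lift_rel (K : Type) [Field K] (n : ℕ) (x y : FA K n) (h : BRel K n x y) :
    liftF K n x = liftF K n y := by
  obtain ⟨h, rfl⟩ := h
  rw [map_zero]
  apply end_zero
  intro w
  rcases h with rfl | rfl | ⟨i, hi, rfl | rfl | rfl | rfl⟩
  · simp only [map_mul]
    rw [lift_ga _ _ _ (by omega) (by omega), lift_gb _ _ _ (by omega) (by omega),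
      lift_gc _ _ _ (by omega) (by omega)]
    simp only [MulOpposite.unop_mul, MulOpposite.unop_op, Module.End.mul_apply, ext_single]
    by_cases h : w.take 1 = [L.b ((n:ℤ)+1)] ∨ w.take 2 = [L.c (n:ℤ), L.b n] ∨ ((n:ℤ) = 0 ∧ w.take 1 = [L.c 0])
    · simp only [wA, if_pos h, map_zero]
    · simp only [wA, if_neg h, wB, ext_single]
      simp [wC]
  · simp only [map_mul]
    rw [lift_ga _ _ _ (by omega) (by omega),
      lift_gc _ _ _ (by omega) (by omega)]
    simp only [MulOpposite.unop_mul, MulOpposite.unop_op, Module.End.mul_apply, ext_single]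
    unfold wC
    split_ifs <;> simp [ext_single, wA]
  · simp only [map_mul, map_add]
    rw [lift_ga _ _ _ (by omega) (by omega), lift_gb _ _ _ (by omega) (by omega),
      lift_gc _ _ _ (by omega) (by omega), lift_ga _ _ _ (by omega) (by omega), lift_gb _ _ _ (by omega) (by omega),
      lift_gc _ _ _ (by omega) (by omega)]
    simp only [MulOpposite.unop_mul, MulOpposite.unop_add, MulOpposite.unop_op, Module.End.mul_apply, LinearMap.add_apply, ext_single]
    have e1 : (i:ℤ) ≠ n := by omega
    have e2 : (i:ℤ) + 1 ≠ 0 := by omega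
    rcases w with _ | ⟨x, _ | ⟨y, w⟩⟩
    · simp [wA, wB, wC, ext_single, e1, e2]
    · cases x <;> simp [wA, wB, wC, ext_single, e1, e2] <;> split_ifs <;> simp_all [ext_single, wA, wB, wC]
    · cases x <;> cases y <;> simp [wA, wB, wC, ext_single, e1, e2] <;> split_ifs <;> simp_all [ext_single, wA, wB, wC]
  · simp only [map_mul]
    rw [lift_ga _ _ _ (by omega) (by omega), lift_gb _ _ _ (by omega) (by omega),
      lift_gc _ _ _ (by omega) (by omega)]
    simp only [MulOpposite.unop_mul, MulOpposite.unop_op, Module.End.mul_apply, ext_single, wB]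
    unfold wC
    split_ifs <;> simp_all [ext_single, wA]
  · simp only [map_mul]
    rw [lift_gc _ _ _ (by omega) (by omega), lift_gc _ _ _ (by omega) (by omega)]
    simp only [MulOpposite.unop_mul, MulOpposite.unop_op, Module.End.mul_apply, ext_single]
    generalize hF : ext K (wC K n ((i:ℤ)+1)) = F
    unfold wC
    split_ifs <;> subst hF <;> simp_all [ext_single, wC]
  · simp only [map_mul]
    rw [lift_ga _ _ _ (by omega) (by omega), lift_gb _ _ _ (by omega) (by omega)]
    simp [MulOpposite.unop_mul, MulOpposite.unop_op, Module.End.mul_apply, ext_single, wA, wB]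

noncomputable def φ (K : Type) [Field K] (n : ℕ) :
    B K n →ₐ[K] (Module.End K (N K))ᵐᵒᵖ :=
  RingQuot.liftAlgHom K ⟨liftF K n, fun {x y} h => lift_rel K n x y h⟩

theorem φ_π (K : Type) [Field K] (n : ℕ) (x : FA K n) : φ K n (πB K n x) = liftF K n x := by
  simp [φ, πB]

theorem π_rel (K : Type) [Field K] (n : ℕ) (x : FA K n) (h : x ∈ rels K n) : πB K n x = 0 := by
  rw [← map_zero (πB K n)]
  exact RingQuot.mkAlgHom_rel K ⟨h, rfl⟩

section rel
variable (K : Type) [Field K] (n : ℕ)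

theorem b_top : bB K n (n+1) = 0 := by simp [bB, gb]
theorem c_bot : cB K n (-1) = 0 := by simp [cB, gc]

theorem r_ba (i : ℤ) (h0 : 0 ≤ i) (h1 : i ≤ n) : bB K n (i+1) * aB K n i = 0 := by
  rcases h1.eq_or_lt with rfl | h1
  · rw [b_top, zero_mul]
  · lift i to ℕ using h0
    simp only [aB, bB, ← map_mul]
    exact π_rel _ _ _ (Or.inr (Or.inr ⟨i, by omega, by simp⟩))

theorem r_cc (i : ℤ) (h0 : 0 ≤ i) (h1 : i ≤ n) : cB K n (i-1) * cB K n i = 0 := by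
  lift i to ℕ using h0
  rcases i with _ | i
  · simp [c_bot]
  · simp only [cB, ← map_mul]
    exact π_rel _ _ _ (Or.inr (Or.inr ⟨i, by omega, by simp⟩))

theorem r_ca : cB K n 0 * aB K n 0 = 0 := by
  simp only [cB, aB, ← map_mul]
  exact π_rel _ _ _ (Or.inr (Or.inl rfl))

theorem r_bca (i : ℤ) (h0 : 0 ≤ i) (h1 : i ≤ n) : bB K n i * cB K n i * aB K n i = 0 := by
  lift i to ℕ using h0
  rcases i with _ | i
  · simp [mul_assoc, r_ca]
  · simp only [cB, bB, aB, ← map_mul]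
    exact π_rel _ _ _ (Or.inr (Or.inr ⟨i, by omega, by simp⟩))

theorem r_abc_top : aB K n n * bB K n n * cB K n n = 0 := by
  simp only [cB, bB, aB, ← map_mul]
  exact π_rel _ _ _ (Or.inl rfl)

theorem r_abc (i : ℤ) (h0 : 0 ≤ i) (h1 : i < n) : aB K n i * bB K n i * cB K n i =
    - (cB K n (i+1) * aB K n (i+1) * bB K n (i+1)) := by
  lift i to ℕ using h0
  rw [← add_eq_zero_iff_eq_neg]
  simp only [cB, bB, aB, ← map_mul, ← map_add]
  exact π_rel _ _ _ (Or.inr (Or.inr ⟨i, by omega, by simp⟩))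

noncomputable def val : L → B K n
  | L.a i => aB K n i
  | L.b i => bB K n i
  | L.c i => cB K n i

noncomputable def pw : List L → B K n
  | [] => 1
  | l :: w => pw w * val K n l

noncomputable def p : N K →ₗ[K] B K n := ext K (pw K n)

theorem p_single (w : List L) : p K n (Finsupp.single w 1) = pw K n w := ext_single _ _ _

theorem take1 {w : List L} {x : L} (h : w.take 1 = [x]) : ∃ v, w = x :: v := by
  rcases w with _ | ⟨y, w⟩ <;> simp_all

theorem take2 {w : List L} {x y : L} (h : w.take 2 = [x, y]) : ∃ v, w = x :: y :: v := by
  rcases w with _ | ⟨z, _ | ⟨t, w⟩⟩ <;> simp_all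

theorem p_wA (i : ℤ) (h0 : 0 ≤ i) (h1 : i ≤ n) (w : List L) :
    p K n (wA K i w) = pw K n w * aB K n i := by
  unfold wA
  split_ifs with h
  · rw [map_zero]
    rcases h with h | h | ⟨rfl, h⟩
    · obtain ⟨v, rfl⟩ := take1 h
      simp only [pw, val, mul_assoc, r_ba K n i h0 h1, mul_zero]
    · obtain ⟨v, rfl⟩ := take2 h
      have := r_bca K n i h0 h1
      simp only [mul_assoc] at this
      simp only [pw, val, mul_assoc, this, mul_zero]
    · obtain ⟨v, rfl⟩ := take1 h
      simp only [pw, val, mul_assoc, r_ca K n, mul_zero]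
  · rw [p_single]; rfl

theorem gen1 {R : Type} [Ring R] (u c s c' t : R) (h : s = -(c' * t)) (h3 : c * c' = 0) :
    u * (c * s) = 0 := by
  rw [h, mul_neg, ← mul_assoc c, h3]; simp

theorem gen2 {R : Type} [Ring R] (u c : R) : -(u * c) = u * (-c) := by simp

theorem gen3 {K R : Type} [Field K] [Ring R] [Algebra K R] (r : K) (x y : R) :
    r • x - r • y = algebraMap K R r * (x - y) := by
  rw [← Algebra.smul_def, smul_sub]

theorem gen4 {R : Type} [Ring R] (c a b d e : R) (h : a * b * d = -(e)) (h3 : c * e = 0) :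
    c * a * (b * d) = 0 := by
  rw [mul_assoc, ← mul_assoc a, h, mul_neg, h3, neg_zero]

theorem p_wC (i : ℤ) (h0 : 0 ≤ i) (h1 : i ≤ n) (w : List L) :
    p K n (wC K n i w) = pw K n w * cB K n i := by
  unfold wC
  split_ifs with h h' h''
  · obtain ⟨v, rfl⟩ := take1 h
    simp only [pw, val, mul_assoc, r_cc K n i h0 h1, mul_zero, map_zero]
  · obtain ⟨v, rfl⟩ := take2 h'
    rw [map_zero]
    by_cases hi : i = n
    · subst hi
      have := r_abc_top K n
      simp only [mul_assoc] at this
      simp only [pw, val, mul_assoc, this, mul_zero]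
    · simp only [hi, false_or] at h''
      obtain ⟨u, hu⟩ := take1 h''
      simp only [List.drop] at hu
      subst hu
      have := r_abc K n i h0 (by omega)
      have h3 := r_cc K n (i+1) (by omega) (by omega)
      simp only [add_sub_cancel_right] at h3
      simp only [mul_assoc] at this
      simp only [pw, val, mul_assoc]
      exact (gen1 _ _ _ _ _ this h3).symm
  · obtain ⟨v, rfl⟩ := take2 h'
    have := r_abc K n i h0 (by omega)
    simp only [mul_assoc] at this
    rw [map_neg, p_single]
    simp only [pw, val, mul_assoc, this, List.drop]
    exact gen2 _ _
  · rw [p_single]; rfl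

theorem p_ext (f : List L → N K) (x : B K n) (h : ∀ w, p K n (f w) = pw K n w * x) (m : N K) :
    p K n (ext K f m) = p K n m * x := by
  have : p K n ∘ₗ ext K f = (LinearMap.mulRight K x) ∘ₗ p K n := by
    apply Finsupp.lhom_ext'
    intro w
    ext1
    simp [ext_single, p_single, h]
  exact LinearMap.congr_fun this m

theorem p_act (x : B K n) (m : N K) : p K n ((φ K n x).unop m) = p K n m * x := by
  obtain ⟨x, rfl⟩ : ∃ y, πB K n y = x := RingQuot.mkAlgHom_surjective K _ x
  rw [φ_π]
  induction x using FreeAlgebra.induction generalizing m with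
  | grade0 r =>
    simp [Algebra.algebraMap_eq_smul_one]
  | grade1 g =>
    have key : ∀ i : Fin (n+1), (0:ℤ) ≤ i.val ∧ (i.val:ℤ) ≤ n := fun i => by omega
    rcases g with i | i | i
    · have e : FreeAlgebra.ι K (Gen.a i) = ga K n i.val := by simp [ga, (key i).2]
      rw [e, lift_ga _ _ _ (key i).1 (key i).2]
      exact p_ext K n _ _ (p_wA K n _ (key i).1 (key i).2) m
    · have e : FreeAlgebra.ι K (Gen.b i) = gb K n i.val := by simp [gb, (key i).2]
      rw [e, lift_gb _ _ _ (key i).1 (key i).2]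
      exact p_ext K n _ _ (fun w => p_single _ _ _) m
    · have e : FreeAlgebra.ι K (Gen.c i) = gc K n i.val := by simp [gc, (key i).2]
      rw [e, lift_gc _ _ _ (key i).1 (key i).2]
      exact p_ext K n _ _ (p_wC K n _ (key i).1 (key i).2) m
  | mul x y hx hy => simp [hx, hy, mul_assoc]
  | add x y hx hy => simp [hx, hy, mul_add]

theorem main (y : B K n) (I : Ideal (B K n)) (S : List L → N K)
    (h : ∀ w, pw K n w - p K n (ext K S ((φ K n y).unop (Finsupp.single w 1))) ∈ I)
    (x : B K n) (hx : x * y = 0) : x ∈ I := by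
  have h' : ∀ m : N K, p K n m - p K n (ext K S ((φ K n y).unop m)) ∈ I := by
    intro m
    induction m using Finsupp.induction_linear with
    | zero => simp
    | add f g hf hg =>
      have := I.add_mem hf hg
      simp only [map_add]
      convert this using 1
      abel
    | single w r =>
      have := I.mul_mem_left (algebraMap K _ r) (h w)
      have e : (Finsupp.single w r : N K) = r • Finsupp.single w 1 := by simp
      rw [e]
      simp only [map_smul, p_single]
      have e3 := gen3 (R := B K n) r (pw K n w)
        (p K n (ext K S ((φ K n y).unop (Finsupp.single w 1))))
      rw [← e3] at this
      exact this
  have h2 := h' ((φ K n x).unop (Finsupp.single [] 1))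
  have h3 : (φ K n y).unop ((φ K n x).unop (Finsupp.single [] 1)) = 0 := by
    rw [← Module.End.mul_apply, ← MulOpposite.unop_mul, ← map_mul, hx]; simp
  rw [h3, p_act, p_single] at h2
  simpa [pw] using h2

theorem φa (i : ℤ) (h0 : 0 ≤ i) (h1 : i ≤ n) : (φ K n (aB K n i)).unop = ext K (wA K i) := by
  rw [aB, φ_π, lift_ga _ _ _ h0 h1]; rfl
theorem φb (i : ℤ) (h0 : 0 ≤ i) (h1 : i ≤ n) : (φ K n (bB K n i)).unop = ext K (wB K i) := by
  rw [bB, φ_π, lift_gb _ _ _ h0 h1]; rfl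
theorem φc (i : ℤ) (h0 : 0 ≤ i) (h1 : i ≤ n) : (φ K n (cB K n i)).unop = ext K (wC K n i) := by
  rw [cB, φ_π, lift_gc _ _ _ h0 h1]; rfl

open Classical in
noncomputable def S1 (i : ℤ) : List L → N K := fun w =>
  if w.take 2 = [L.c i, L.b i] then Finsupp.single (w.drop 2) 1
  else if w.take 3 = [L.b (i+1), L.a (i+1), L.c (i+1)] then
    - Finsupp.single (L.a i :: w.drop 3) 1 else 0

noncomputable def S2 : List L → N K := fun w => Finsupp.single (w.drop 1) 1
noncomputable def S3 : List L → N K := fun w => Finsupp.single (w.drop 2) 1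

end rel
end Aux

open Aux in
/-- left annihilator ideals of `b_i c_i`, `a_i`, and `c_i a_i` for `1 ≤ i ≤ n-1`. -/
theorem stmt_3 (K : Type) [Field K] (n : ℕ) (i : ℕ) (h1 : 1 ≤ i) (h2 : i ≤ n - 1) :
    lann K n (bB K n i * cB K n i) = Ideal.span {cB K n i * aB K n i} ∧
    lann K n (aB K n i) =
      Ideal.span {bB K n i * cB K n i} + Ideal.span {bB K n (i+1)} ∧
    lann K n (cB K n i * aB K n i) =
      Ideal.span {bB K n i} + Ideal.span {cB K n ((i : ℤ) - 1)} := by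
  have z0 : (0:ℤ) ≤ i := by omega
  have z1 : (i:ℤ) ≤ n := by omega
  have z2 : (i:ℤ) ≠ n := by omega
  have z3 : (i:ℤ) ≠ 0 := by omega
  have bca := r_bca K n i z0 z1
  have ba := r_ba K n i z0 z1
  have cc := r_cc K n i z0 z1
  have cc2 := r_cc K n (i+1) (by omega) (by omega)
  have abc := r_abc K n i z0 (by omega)
  simp only [add_sub_cancel_right] at cc2
  refine ⟨le_antisymm ?_ ?_, le_antisymm ?_ ?_, le_antisymm ?_ ?_⟩
  · intro x hx
    refine main K n _ _ (S1 K i) ?_ x hx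
    intro w
    rw [map_mul, MulOpposite.unop_mul, φb K n i z0 z1, φc K n i z0 z1, Module.End.mul_apply,
      ext_single, wB, ext_single]
    by_cases hw : w.take 1 = [L.a (i:ℤ)]
    · obtain ⟨v, rfl⟩ := take1 hw
      by_cases hv : v.take 1 = [L.c (i:ℤ)]
      · obtain ⟨u, rfl⟩ := take1 hv
        have e : wC K n i (L.b (i:ℤ) :: L.a (i:ℤ) :: L.c (i:ℤ) :: u) = 0 := by simp [wC]
        rw [e, map_zero, map_zero, sub_zero]
        simp only [pw, val, mul_assoc]
        exact Ideal.mul_mem_left _ _ (Ideal.subset_span rfl)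
      · simp [wC, hv, z2, ext_single, S1, p_single]
    · simp [wC, hw, ext_single, S1, p_single]
  · rw [Ideal.span_le, Set.singleton_subset_iff]
    change _ * _ = 0
    refine gen4 _ _ _ _ _ abc ?_
    rw [mul_assoc, ← mul_assoc, cc2, zero_mul]
  · intro x hx
    refine main K n _ _ (S2 K) ?_ x hx
    intro w
    rw [φa K n i z0 z1, ext_single, wA]
    split_ifs with h
    · simp only [map_zero, sub_zero]
      rcases h with h | h | ⟨h, -⟩
      · obtain ⟨v, rfl⟩ := take1 h
        exact Ideal.mem_sup_right (Ideal.mul_mem_left _ _ (Ideal.subset_span rfl))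
      · obtain ⟨v, rfl⟩ := take2 h
        simp only [pw, val, mul_assoc]
        exact Ideal.mem_sup_left (Ideal.mul_mem_left _ _ (Ideal.subset_span rfl))
      · exact absurd h z3
    · simp [ext_single, S2, p_single]
  · refine sup_le ?_ ?_ <;> rw [Ideal.span_le, Set.singleton_subset_iff]
    · exact bca
    · exact ba
  · intro x hx
    refine main K n _ _ (S3 K) ?_ x hx
    intro w
    rw [map_mul, MulOpposite.unop_mul, φa K n i z0 z1, φc K n i z0 z1, Module.End.mul_apply,
      ext_single]
    by_cases hw : w.take 1 = [L.b (i:ℤ)]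
    · obtain ⟨v, rfl⟩ := take1 hw
      have : ext K (wA K i) (wC K n i (L.b (i:ℤ) :: v)) = 0 := by
        unfold wC
        split_ifs <;> simp_all [ext_single, wA]
      rw [this]
      simp only [map_zero, sub_zero]
      exact Ideal.mem_sup_left (Ideal.mul_mem_left _ _ (Ideal.subset_span rfl))
    · by_cases hw' : w.take 1 = [L.c ((i:ℤ)-1)]
      · obtain ⟨v, rfl⟩ := take1 hw'
        have e : wC K n i (L.c ((i:ℤ)-1) :: v) = 0 := by simp [wC]
        rw [e, map_zero, map_zero, map_zero, sub_zero]
        exact Ideal.mem_sup_right (Ideal.mul_mem_left _ _ (Ideal.subset_span rfl))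
      · have h3 : ¬ w.take 2 = [L.b (i:ℤ), L.a i] := by
          intro h
          obtain ⟨v, rfl⟩ := take2 h
          simp at hw
        have e1 : wC K n i w = Finsupp.single (L.c (i:ℤ) :: w) 1 := by
          rw [wC, if_neg hw', if_neg h3]
        have e2 : wA K i (L.c (i:ℤ) :: w) = Finsupp.single (L.a (i:ℤ) :: L.c (i:ℤ) :: w) 1 := by
          rw [wA, if_neg]
          rintro (h | h | ⟨h, -⟩)
          · simp at h
          · obtain ⟨v, hv⟩ := take2 h
            simp only [List.cons.injEq, true_and] at hv
            subst hv
            simp at hw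
          · exact z3 h
        rw [e1, ext_single, e2, ext_single, S3, p_single]
        simp
  · refine sup_le ?_ ?_ <;> rw [Ideal.span_le, Set.singleton_subset_iff]
    · change _ * _ = 0
      rw [← mul_assoc, bca]
    · change _ * _ = 0
      rw [← mul_assoc, cc, zero_mul]
end

section
/- Let 1 ≤ i ≤ n−1. Consider the maps of free left B-modules φ : B² → B, (w, x) ↦ w b_i c_i + x b_{i+1}, and ψ : B → B², z ↦ (z a_i, z c_{i+1} a_{i+1}). Then (i) ker ψ = im φ, and (ii) ker φ = im ψ; that is, the four-term complex B² → B → B² → B with differentials φ, ψ, φ is exact at the two middle positions. -/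
namespace S5

inductive T : Type
  | a : ℕ → T
  | b : ℕ → T
  | c : ℕ → T

def bad (n : ℕ) : T → List T → Prop
  | .a j, .b k :: _ => k = j + 1
  | .a j, .c k :: w => k = j ∧ (j = 0 ∨ ∃ u, w = .b j :: u)
  | .b j, .a k :: .c l :: _ => j ≠ 0 ∧ k = j ∧ l = j
  | .c j, .c k :: _ => j = k + 1
  | .c j, .b k :: .a l :: _ => j = n ∧ k = n ∧ l = n
  | _, _ => False

def Nrm (n : ℕ) : List T → Prop
  | [] => True
  | x :: w => ¬ bad n x w ∧ Nrm n w

abbrev NN (K : Type) [Field K] (n : ℕ) := {w : List T // Nrm n w} →₀ K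

noncomputable section

open Classical in
def s (K : Type) [Field K] (n : ℕ) (w : List T) : NN K n :=
  if h : Nrm n w then Finsupp.single ⟨w, h⟩ 1 else 0

variable (K : Type) [Field K] (n : ℕ)

lemma s_zero {w : List T} (h : ¬ Nrm n w) : s K n w = 0 := by
  simp [s, h]

def rule : T → List T → NN K n
  | .b (j+1), .a k :: .c l :: u =>
      if k = j+1 ∧ l = j+1 then - s K n (.c j :: .b j :: .a j :: u)
      else s K n (.b (j+1) :: .a k :: .c l :: u)
  | x, w => s K n (x :: w)

/-- linear extension of a function on words -/
def ext {M : Type} [AddCommGroup M] [Module K M] (f : List T → M) : NN K n →ₗ[K] M :=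
  Finsupp.linearCombination K (fun w : {w : List T // Nrm n w} => f w.1)

lemma ext_s {M : Type} [AddCommGroup M] [Module K M] (f : List T → M) {w : List T}
    (h : Nrm n w) : ext K n f (s K n w) = f w := by
  simp [ext, s, h]

lemma ext_s' {M : Type} [AddCommGroup M] [Module K M] (f : List T → M) (w : List T)
    (h : ¬ Nrm n w → f w = 0) : ext K n f (s K n w) = f w := by
  by_cases hw : Nrm n w
  · exact ext_s K n f hw
  · rw [h hw, s_zero K n hw, map_zero]

lemma hom_ext {M : Type} [AddCommGroup M] [Module K M] {f g : NN K n →ₗ[K] M}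
    (h : ∀ w, Nrm n w → f (s K n w) = g (s K n w)) : f = g := by
  apply Finsupp.lhom_ext'
  rintro ⟨w, hw⟩
  apply LinearMap.ext_ring
  have := h w hw
  simpa [s, hw] using this

def act (x : T) : NN K n →ₗ[K] NN K n := ext K n (rule K n x)

lemma rule_nrm {x : T} {w : List T} (h : ¬ bad n x w) : rule K n x w = s K n (x :: w) := by
  unfold rule
  split
  · rename_i j k l u
    rw [if_neg]
    rintro ⟨rfl, rfl⟩
    simp [bad] at h
  · rfl

lemma act_s (x : T) (w : List T) : act K n x (s K n w) = rule K n x w := by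
  apply ext_s'
  intro h
  unfold rule
  split
  · rename_i j k l u
    split_ifs with hh
    · obtain ⟨rfl, rfl⟩ := hh
      rw [s_zero, neg_zero]
      intro h'
      apply h
      simp only [Nrm] at h' ⊢
      obtain ⟨h1, h2, h3, h4⟩ := h'
      refine ⟨?_, ?_, h4⟩
      · rcases u with _ | ⟨(k|k|k), u⟩ <;> simp [bad] at *
        exact h3
      · rcases u with _ | ⟨(k|k|k), u⟩ <;> simp [bad] at *
        · rcases u with _ | ⟨(k|k|k), u⟩ <;> simp [bad] at *
          omega
        · omega
    · exact s_zero K n (fun h' => h h'.2)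
  · exact s_zero K n (fun h' => h h'.2)

lemma act_nrm {x : T} {w : List T} (h : Nrm n (x :: w)) :
    act K n x (s K n w) = s K n (x :: w) := by
  rw [act_s, rule_nrm K n h.1]

lemma act_a (j : ℕ) (w : List T) : act K n (.a j) (s K n w) = s K n (.a j :: w) := act_s K n _ _
lemma act_c (j : ℕ) (w : List T) : act K n (.c j) (s K n w) = s K n (.c j :: w) := act_s K n _ _


lemma act_b (j : ℕ) (w : List T) :
    (∃ k u, j = k + 1 ∧ w = .a (k+1) :: .c (k+1) :: u ∧
      act K n (.b j) (s K n w) = - s K n (.c k :: .b k :: .a k :: u)) ∨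
    (¬ bad n (.b j) w ∧ act K n (.b j) (s K n w) = s K n (.b j :: w)) := by
  by_cases hb : bad n (.b j) w
  · left
    unfold bad at hb
    split at hb <;> simp_all
    obtain ⟨h0, rfl, rfl⟩ := hb
    rename_i k _ _
    obtain ⟨k, rfl⟩ := Nat.exists_eq_succ_of_ne_zero h0
    refine ⟨k, rfl, ?_⟩
    rw [act_s]
    simp [rule]
  · exact Or.inr ⟨hb, by rw [act_s, rule_nrm K n hb]⟩

lemma rel1 : act K n (.c n) ∘ₗ act K n (.b n) ∘ₗ act K n (.a n) = 0 := by
  apply hom_ext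
  intro w hw
  simp only [LinearMap.comp_apply, act_a, LinearMap.zero_apply]
  rcases act_b K n n (.a n :: w) with ⟨k, u, h1, h2, h3⟩ | ⟨h1, h2⟩
  · rw [h3, map_neg, act_c, s_zero, neg_zero]
    rintro ⟨h, -⟩
    simp [bad] at h
    omega
  · rw [h2, act_c, s_zero]
    rintro ⟨h, -⟩
    simp [bad] at h

lemma rel2 : act K n (.a 0) ∘ₗ act K n (.c 0) = 0 := by
  apply hom_ext
  intro w hw
  simp only [LinearMap.comp_apply, act_a, act_c, LinearMap.zero_apply]
  apply s_zero
  rintro ⟨h, -⟩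
  simp [bad] at h

lemma rel3 (j : ℕ) : act K n (.c j) ∘ₗ act K n (.b j) ∘ₗ act K n (.a j) +
    act K n (.b (j+1)) ∘ₗ act K n (.a (j+1)) ∘ₗ act K n (.c (j+1)) = 0 := by
  apply hom_ext
  intro w hw
  simp only [LinearMap.comp_apply, act_a, act_c, LinearMap.zero_apply, LinearMap.add_apply]
  rw [act_s K n (.b (j+1))]
  rcases act_b K n j (.a j :: w) with ⟨k, u, h1, h2, h3⟩ | ⟨h1, h2⟩
  · rw [h3, map_neg, act_c, s_zero]
    · simp only [List.cons.injEq] at h2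
      obtain ⟨-, rfl⟩ := h2
      simp only [rule, and_self, if_true]
      rw [s_zero]
      · simp
      · rintro ⟨-, h, -⟩
        subst h1
        simp [bad] at h
    · rintro ⟨h, -⟩
      simp [bad] at h
      omega
  · rw [h2, act_c]
    simp [rule]

lemma rel4 (j : ℕ) : act K n (.a (j+1)) ∘ₗ act K n (.c (j+1)) ∘ₗ act K n (.b (j+1)) = 0 := by
  apply hom_ext
  intro w hw
  simp only [LinearMap.comp_apply, LinearMap.zero_apply]
  rcases act_b K n (j+1) w with ⟨k, u, h1, h2, h3⟩ | ⟨h1, h2⟩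
  · rw [h3, map_neg, act_c, s_zero]
    · simp
    · rintro ⟨h, -⟩
      simp [bad] at h
      omega
  · rw [h2, act_c, act_a]
    apply s_zero
    rintro ⟨h, -⟩
    simp [bad] at h

lemma rel5 (j : ℕ) : act K n (.c (j+1)) ∘ₗ act K n (.c j) = 0 := by
  apply hom_ext
  intro w hw
  simp only [LinearMap.comp_apply, act_c, LinearMap.zero_apply]
  apply s_zero
  rintro ⟨h, -⟩
  simp [bad] at h

lemma rel6 (j : ℕ) : act K n (.a j) ∘ₗ act K n (.b (j+1)) = 0 := by
  apply hom_ext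
  intro w hw
  simp only [LinearMap.comp_apply, LinearMap.zero_apply]
  rcases act_b K n (j+1) w with ⟨k, u, h1, h2, h3⟩ | ⟨h1, h2⟩
  · rw [h3, map_neg, act_a, s_zero, neg_zero]
    rintro ⟨h, -⟩
    simp [bad] at h
    omega
  · rw [h2, act_a, s_zero]
    rintro ⟨h, -⟩
    simp [bad] at h

def toT : Gen n → T
  | .a j => .a j
  | .b j => .b j
  | .c j => .c j

def ρ₀ : FA K n →ₐ[K] (Module.End K (NN K n))ᵐᵒᵖ :=
  FreeAlgebra.lift K (fun g => MulOpposite.op (act K n (toT n g)))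

lemma ρ₀_a (j : ℕ) (h : j ≤ n) : ρ₀ K n (ga K n j) = MulOpposite.op (act K n (.a j)) := by
  have : (0 : ℤ) ≤ j ∧ (j : ℤ) ≤ n := by omega
  simp [ρ₀, ga, this, h, toT]

lemma ρ₀_b (j : ℕ) (h : j ≤ n) : ρ₀ K n (gb K n j) = MulOpposite.op (act K n (.b j)) := by
  have : (0 : ℤ) ≤ j ∧ (j : ℤ) ≤ n := by omega
  simp [ρ₀, gb, this, h, toT]

lemma ρ₀_c (j : ℕ) (h : j ≤ n) : ρ₀ K n (gc K n j) = MulOpposite.op (act K n (.c j)) := by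
  have : (0 : ℤ) ≤ j ∧ (j : ℤ) ≤ n := by omega
  simp [ρ₀, gc, this, h, toT]

lemma ρ₀_rel (x : FA K n) (hx : x ∈ rels K n) : ρ₀ K n x = 0 := by
  have e : ∀ j : ℕ, (j : ℤ) + 1 = ((j + 1 : ℕ) : ℤ) := by intro j; push_cast; rfl
  have e0 : (0 : ℤ) = ((0 : ℕ) : ℤ) := rfl
  apply MulOpposite.unop_injective
  rcases hx with rfl | rfl | ⟨j, hj, rfl | rfl | rfl | rfl⟩
  · rw [map_mul, map_mul, ρ₀_a _ _ _ le_rfl, ρ₀_b _ _ _ le_rfl, ρ₀_c _ _ _ le_rfl]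
    exact rel1 K n
  · rw [e0, map_mul, ρ₀_a _ _ _ (Nat.zero_le _), ρ₀_c _ _ _ (Nat.zero_le _)]
    exact rel2 K n
  · rw [e, map_add, map_mul, map_mul, map_mul, map_mul, ρ₀_a _ _ _ hj, ρ₀_b _ _ _ hj, ρ₀_c _ _ _ hj,
      ρ₀_a _ _ _ hj.le, ρ₀_b _ _ _ hj.le, ρ₀_c _ _ _ hj.le]
    exact rel3 K n j
  · rw [e, map_mul, map_mul, ρ₀_a _ _ _ hj, ρ₀_b _ _ _ hj, ρ₀_c _ _ _ hj]
    exact rel4 K n j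
  · rw [e, map_mul, ρ₀_c _ _ _ hj, ρ₀_c _ _ _ hj.le]
    exact rel5 K n j
  · rw [e, map_mul, ρ₀_b _ _ _ hj, ρ₀_a _ _ _ hj.le]
    exact rel6 K n j

def ρ : B K n →ₐ[K] (Module.End K (NN K n))ᵐᵒᵖ :=
  RingQuot.liftAlgHom K ⟨ρ₀ K n, by
    rintro x y ⟨hx, rfl⟩
    rw [ρ₀_rel K n x hx, map_zero]⟩

lemma ρ_π (x : FA K n) : ρ K n (πB K n x) = ρ₀ K n x := by
  simp [ρ, πB]

/-- the action -/
def E (z : B K n) : NN K n →ₗ[K] NN K n := MulOpposite.unop (ρ K n z)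

lemma E_mul (x y : B K n) (m : NN K n) : E K n (x * y) m = E K n y (E K n x m) := by
  simp [E]

lemma E_add (x y : B K n) (m : NN K n) : E K n (x + y) m = E K n x m + E K n y m := by
  simp [E]

lemma E_zero (m : NN K n) : E K n 0 m = 0 := by
  simp [E]

lemma E_a (j : ℕ) (h : j ≤ n) : E K n (aB K n j) = act K n (.a j) := by
  rw [E, aB, ρ_π, ρ₀_a K n j h, MulOpposite.unop_op]
lemma E_b (j : ℕ) (h : j ≤ n) : E K n (bB K n j) = act K n (.b j) := by
  rw [E, bB, ρ_π, ρ₀_b K n j h, MulOpposite.unop_op]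
lemma E_c (j : ℕ) (h : j ≤ n) : E K n (cB K n j) = act K n (.c j) := by
  rw [E, cB, ρ_π, ρ₀_c K n j h, MulOpposite.unop_op]

/-- relations in `B` -/
lemma π_rel {x : FA K n} (hx : x ∈ rels K n) : πB K n x = 0 := by
  have := RingQuot.mkAlgHom_rel K (s := BRel K n) (x := x) (y := 0) ⟨hx, rfl⟩
  rw [map_zero] at this
  exact this

lemma aB_out (j : ℕ) (h : ¬ j ≤ n) : aB K n j = 0 := by
  have : ¬ ((0 : ℤ) ≤ j ∧ (j : ℤ) ≤ n) := by omega
  rw [aB, ga, dif_neg this, map_zero]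
lemma bB_out (j : ℕ) (h : ¬ j ≤ n) : bB K n j = 0 := by
  have : ¬ ((0 : ℤ) ≤ j ∧ (j : ℤ) ≤ n) := by omega
  rw [bB, gb, dif_neg this, map_zero]
lemma cB_out (j : ℕ) (h : ¬ j ≤ n) : cB K n j = 0 := by
  have : ¬ ((0 : ℤ) ≤ j ∧ (j : ℤ) ≤ n) := by omega
  rw [cB, gc, dif_neg this, map_zero]

lemma B1 : aB K n n * bB K n n * cB K n n = 0 := by
  simp only [aB, bB, cB, ← map_mul]
  exact π_rel K n (Or.inl rfl)

lemma B2 : cB K n (0 : ℕ) * aB K n (0 : ℕ) = 0 := by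
  simp only [aB, bB, cB, ← map_mul]
  exact π_rel K n (Or.inr (Or.inl rfl))

lemma B3 (j : ℕ) : aB K n j * bB K n j * cB K n j +
    cB K n (j+1 : ℕ) * aB K n (j+1 : ℕ) * bB K n (j+1 : ℕ) = 0 := by
  by_cases h : j < n
  · simp only [aB, bB, cB, ← map_mul, ← map_add]
    exact π_rel K n (Or.inr (Or.inr ⟨j, h, Or.inl (by push_cast; rfl)⟩))
  · rw [aB_out K n (j+1) (by omega)]
    by_cases h' : j = n
    · subst h'
      simp [B1]
    · rw [aB_out K n j (by omega)]; simp

lemma B4 (j : ℕ) : bB K n (j+1 : ℕ) * cB K n (j+1 : ℕ) * aB K n (j+1 : ℕ) = 0 := by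
  by_cases h : j < n
  · simp only [aB, bB, cB, ← map_mul, ← map_add]
    exact π_rel K n (Or.inr (Or.inr ⟨j, h, Or.inr (Or.inl (by push_cast; rfl))⟩))
  · rw [aB_out K n (j+1) (by omega)]; simp

lemma B5 (j : ℕ) : cB K n j * cB K n (j+1 : ℕ) = 0 := by
  by_cases h : j < n
  · simp only [aB, bB, cB, ← map_mul, ← map_add]
    exact π_rel K n (Or.inr (Or.inr ⟨j, h, Or.inr (Or.inr (Or.inl (by push_cast; rfl)))⟩))
  · rw [cB_out K n (j+1) (by omega)]; simp

lemma B6 (j : ℕ) : bB K n (j+1 : ℕ) * aB K n j = 0 := by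
  by_cases h : j < n
  · simp only [aB, bB, cB, ← map_mul, ← map_add]
    exact π_rel K n (Or.inr (Or.inr ⟨j, h, Or.inr (Or.inr (Or.inr (by push_cast; rfl)))⟩))
  · rw [bB_out K n (j+1) (by omega)]; simp

def val : T → B K n
  | .a j => aB K n j
  | .b j => bB K n j
  | .c j => cB K n j

def evl : List T → B K n
  | [] => 1
  | x :: w => evl w * val K n x

def ev : NN K n →ₗ[K] B K n := ext K n (evl K n)

lemma rule_ev_aux (j : ℕ) (u : List T) : evl K n (.b (j+1) :: .a (j+1) :: .c (j+1) :: u) =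
    - evl K n (.c j :: .b j :: .a j :: u) := by
  rw [eq_neg_iff_add_eq_zero]
  simp only [evl, val]
  have := B3 K n j
  rw [mul_assoc, mul_assoc, mul_assoc, mul_assoc, ← mul_add, ← mul_assoc (aB K n j),
    ← mul_assoc (cB K n _), add_comm, this, mul_zero]

/-- bad words vanish, except for the reducible ones -/
lemma bad_ev (x : T) (w : List T) (h : bad n x w) (hx : ∀ j, x ≠ .b j) :
    evl K n (x :: w) = 0 := by
  unfold bad at h
  split at h
  · subst h
    simp only [evl, val, mul_assoc, B6, mul_zero]
  · obtain ⟨rfl, h⟩ := h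
    rename_i j w
    rcases j with _ | j
    · simp only [evl, val, mul_assoc, B2, mul_zero]
    · obtain ⟨u, rfl⟩ := h.resolve_left (by omega)
      have := B4 K n j
      rw [mul_assoc] at this
      simp only [evl, val, mul_assoc, this, mul_zero]
  · exact absurd rfl (hx _)
  · subst h
    simp only [evl, val, mul_assoc, B5, mul_zero]
  · obtain ⟨rfl, rfl, rfl⟩ := h
    rename_i j u
    have := B1 K j
    rw [mul_assoc] at this
    simp only [evl, val, mul_assoc, this, mul_zero]
  · exact h.elim


lemma nrm_cba {k : ℕ} {u : List T} (hk : k ≠ n) (h : Nrm n (.a (k+1) :: .c (k+1) :: u)) :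
    Nrm n (.c k :: .b k :: .a k :: u) := by
  obtain ⟨h1, h2, h3⟩ := h
  refine ⟨?_, ?_, ?_, h3⟩
  · simp [bad, hk]
  · rcases u with _ | ⟨(l|l|l), u⟩ <;> simp [bad] at *
    omega
  · rcases u with _ | ⟨(l|l|l), u⟩ <;> simp [bad] at *
    · omega
    · omega

lemma ev_act (x : T) (m : NN K n) : ev K n (act K n x m) = ev K n m * val K n x := by
  suffices h : ev K n ∘ₗ act K n x = LinearMap.mulRight K (val K n x) ∘ₗ ev K n from
    LinearMap.congr_fun h m
  apply hom_ext
  intro w hw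
  simp only [LinearMap.comp_apply, LinearMap.mulRight_apply]
  have e1 : ev K n (s K n w) = evl K n w := ext_s K n _ hw
  have e2 : ¬ bad n x w → ev K n (s K n (x :: w)) = evl K n (x :: w) :=
    fun hb => ext_s K n _ ⟨hb, hw⟩
  have e3 : bad n x w → s K n (x :: w) = 0 := fun hb => s_zero K n (fun h => h.1 hb)
  rw [e1]
  change _ = evl K n (x :: w)
  have key : (∀ j, x ≠ .b j) → act K n x (s K n w) = s K n (x :: w) →
      ev K n (act K n x (s K n w)) = evl K n (x :: w) := by
    intro h1 h2
    rw [h2]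
    by_cases hb : bad n x w
    · rw [e3 hb, map_zero, bad_ev K n x w hb h1]
    · exact e2 hb
  rcases x with j | j | j
  · exact key (by simp) (act_a K n j w)
  · rcases act_b K n j w with ⟨k, u, rfl, rfl, h3⟩ | ⟨h1, h2⟩
    · rw [h3, rule_ev_aux, map_neg]
      congr 1
      by_cases hk : k = n
      · have hb : bad n (.c k) (.b k :: .a k :: u) := by simp [bad, hk]
        rw [s_zero K n (w := .c k :: .b k :: .a k :: u) (fun h => h.1 hb), bad_ev K n _ _ hb (by simp), map_zero]
      · exact ext_s K n _ (nrm_cba n hk hw)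
    · rw [h2]; exact e2 h1
  · exact key (by simp) (act_c K n j w)

lemma π_gen (g : Gen n) : πB K n (FreeAlgebra.ι K g) = val K n (toT n g) := by
  rcases g with j | j | j
  · have : (0 : ℤ) ≤ (j : ℕ) ∧ ((j : ℕ) : ℤ) ≤ n := by omega
    simp only [toT, val, aB, ga, dif_pos this]
    rfl
  · have : (0 : ℤ) ≤ (j : ℕ) ∧ ((j : ℕ) : ℤ) ≤ n := by omega
    simp only [toT, val, bB, gb, dif_pos this]
    rfl
  · have : (0 : ℤ) ≤ (j : ℕ) ∧ ((j : ℕ) : ℤ) ≤ n := by omega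
    simp only [toT, val, cB, gc, dif_pos this]
    rfl

lemma ev_E_π (x : FA K n) : ∀ m : NN K n,
    ev K n (E K n (πB K n x) m) = ev K n m * πB K n x := by
  induction x using FreeAlgebra.induction with
  | grade0 r =>
    intro m
    simp [E, Algebra.algebraMap_eq_smul_one]
  | grade1 g =>
    intro m
    have : E K n (πB K n (FreeAlgebra.ι K g)) = act K n (toT n g) := by
      rw [E, ρ_π]; simp [ρ₀]
    rw [this, ev_act, π_gen]
  | mul x y hx hy =>
    intro m
    rw [map_mul, E_mul, hy, hx, mul_assoc]
  | add x y hx hy =>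
    intro m
    rw [map_add, E_add, map_add, hx, hy, mul_add]

/-- the normal form -/
def nf (z : B K n) : NN K n := E K n z (s K n [])

lemma ev_nf (z : B K n) : ev K n (nf K n z) = z := by
  obtain ⟨x, rfl⟩ := RingQuot.mkAlgHom_surjective K (BRel K n) z
  have h := ev_E_π K n x (s K n [])
  have h1 : ev K n (s K n []) = 1 := ext_s K n _ trivial
  rw [h1, one_mul] at h
  exact h

def Dr (i : ℕ) : List T → NN K n
  | .a k :: u => if k = i then s K n u else 0
  | _ => 0

def H1 (i : ℕ) : List T → NN K n
  | .c k :: .b l :: u => if k = i ∧ l = i then s K n u else 0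
  | _ => 0

def H2 (i : ℕ) : List T → NN K n
  | .b k :: u => if k = i + 1 then s K n u else 0
  | _ => 0

lemma Nrm_tail {x : T} {w : List T} (h : Nrm n (x :: w)) : Nrm n w := h.2

lemma homotopy1 (i : ℕ) (hi : 1 ≤ i) (m : NN K n) :
    m = ext K n (Dr K n i) (act K n (.a i) m) +
      (act K n (.c i) (act K n (.b i) (ext K n (H1 K n i) m)) +
        act K n (.b (i+1)) (ext K n (H2 K n i) m)) := by
  suffices h : LinearMap.id = ext K n (Dr K n i) ∘ₗ act K n (.a i) +
      (act K n (.c i) ∘ₗ act K n (.b i) ∘ₗ ext K n (H1 K n i) +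
        act K n (.b (i+1)) ∘ₗ ext K n (H2 K n i)) from LinearMap.congr_fun h m
  apply hom_ext
  intro w hw
  simp only [LinearMap.comp_apply, LinearMap.add_apply, LinearMap.id_apply, act_a,
    ext_s K n _ hw]
  by_cases hb : bad n (.a i) w
  · rw [s_zero K n (w := .a i :: w) (fun h => h.1 hb), map_zero, zero_add]
    unfold bad at hb
    split at hb
    · subst hb
      rename_i j k u heq
      cases heq
      simp only [H1, H2, if_true, map_zero, zero_add]
      rw [act_nrm K n hw]
    · obtain ⟨rfl, h⟩ := hb
      rename_i k u heq
      cases heq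
      obtain ⟨u, rfl⟩ := h.resolve_left (by omega)
      simp only [H1, H2, if_true, and_self, map_zero, add_zero]
      rw [act_nrm K n hw.2, act_nrm K n hw]
    all_goals simp_all
  · rw [ext_s K n _ (w := .a i :: w) ⟨hb, hw⟩]
    have h1 : H1 K n i w = 0 := by
      unfold H1
      split
      · rw [if_neg]
        rintro ⟨rfl, rfl⟩
        simp [bad] at hb
      · rfl
    have h2 : H2 K n i w = 0 := by
      unfold H2
      split
      · rw [if_neg]
        rintro rfl
        simp [bad] at hb
      · rfl
    simp [h1, h2, Dr]

def G1 (i : ℕ) : List T → NN K n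
  | .c k :: .b l :: .a r :: u => if k = i ∧ l = i ∧ r ≠ i then s K n (.a r :: u) else 0
  | .c k :: .b l :: u => if k = i ∧ l = i then s K n u else 0
  | _ => 0

def G2 (i : ℕ) : List T → NN K n
  | .b k :: u => if k = i + 1 then s K n u else 0
  | .c k :: .b l :: .a r :: u => if k = i ∧ l = i ∧ r = i then
      - s K n (.a (i+1) :: .c (i+1) :: u) else 0
  | _ => 0

lemma act_cb (i : ℕ) (hn : i < n) (w : List T) (hw : Nrm n w) :
    (∃ u, w = .a i :: .c i :: u ∧ act K n (.c i) (act K n (.b i) (s K n w)) = 0) ∨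
    (Nrm n (.c i :: .b i :: w) ∧
      act K n (.c i) (act K n (.b i) (s K n w)) = s K n (.c i :: .b i :: w)) := by
  rcases act_b K n i w with ⟨k, u, rfl, rfl, h3⟩ | ⟨h1, h2⟩
  · left
    refine ⟨u, rfl, ?_⟩
    rw [h3, map_neg, act_c, s_zero, neg_zero]
    rintro ⟨h, -⟩
    simp [bad] at h
  · right
    rw [h2, act_c]
    refine ⟨⟨?_, h1, hw⟩, rfl⟩
    rcases w with _ | ⟨(l|l|l), u⟩ <;> simp [bad]
    omega

lemma homotopy2w (i : ℕ) (hn : i < n) (w : NN K n) :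
    w = act K n (.a i) (ext K n (Dr K n i) w) +
      ext K n (G1 K n i) (act K n (.c i) (act K n (.b i) w)) := by
  suffices h : LinearMap.id = act K n (.a i) ∘ₗ ext K n (Dr K n i) +
      ext K n (G1 K n i) ∘ₗ act K n (.c i) ∘ₗ act K n (.b i) from LinearMap.congr_fun h w
  apply hom_ext
  intro w hw
  simp only [LinearMap.comp_apply, LinearMap.add_apply, LinearMap.id_apply,
    ext_s K n _ hw]
  rcases act_cb K n i hn w hw with ⟨u, rfl, h⟩ | ⟨h1, h2⟩
  · rw [h]
    simp [Dr, act_a]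
  · rw [h2, ext_s K n _ h1]
    rcases w with _ | ⟨(l|l|l), u⟩ <;> simp [Dr, G1]
    by_cases hl : l = i
    · simp [hl, act_a]
    · simp [hl]

lemma homotopy2w' (i : ℕ) (hn : i < n) (w : NN K n) :
    0 = act K n (.a (i+1)) (act K n (.c (i+1)) (ext K n (Dr K n i) w)) +
      ext K n (G2 K n i) (act K n (.c i) (act K n (.b i) w)) := by
  suffices h : 0 = act K n (.a (i+1)) ∘ₗ act K n (.c (i+1)) ∘ₗ ext K n (Dr K n i) +
      ext K n (G2 K n i) ∘ₗ act K n (.c i) ∘ₗ act K n (.b i) from LinearMap.congr_fun h w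
  apply hom_ext
  intro w hw
  simp only [LinearMap.comp_apply, LinearMap.add_apply, LinearMap.zero_apply,
    ext_s K n _ hw]
  rcases act_cb K n i hn w hw with ⟨u, rfl, h⟩ | ⟨h1, h2⟩
  · rw [h]
    simp only [Dr, if_true, act_c, act_a, map_zero, add_zero]
    rw [s_zero]
    rintro ⟨-, h, -⟩
    simp [bad] at h
  · rw [h2, ext_s K n _ h1]
    rcases w with _ | ⟨(l|l|l), u⟩ <;> simp [Dr, G2]
    by_cases hl : l = i
    · simp [hl, act_a, act_c]
    · simp [hl]

lemma homotopy2x (i : ℕ) (hn : i < n) (x : NN K n) :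
    0 = ext K n (G1 K n i) (act K n (.b (i+1)) x) := by
  suffices h : 0 = ext K n (G1 K n i) ∘ₗ act K n (.b (i+1)) from LinearMap.congr_fun h x
  apply hom_ext
  intro w hw
  simp only [LinearMap.comp_apply, LinearMap.zero_apply]
  rcases act_b K n (i+1) w with ⟨k, u, h1, rfl, h3⟩ | ⟨h1, h2⟩
  · obtain rfl : i = k := by omega
    rw [h3, map_neg, ext_s K n _ (nrm_cba n (by omega) hw)]
    simp [G1]
  · rw [h2, ext_s K n _ (w := .b (i+1) :: w) ⟨h1, hw⟩]
    simp [G1]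

lemma homotopy2x' (i : ℕ) (hn : i < n) (x : NN K n) :
    x = ext K n (G2 K n i) (act K n (.b (i+1)) x) := by
  suffices h : LinearMap.id = ext K n (G2 K n i) ∘ₗ act K n (.b (i+1)) from
    LinearMap.congr_fun h x
  apply hom_ext
  intro w hw
  simp only [LinearMap.comp_apply, LinearMap.id_apply]
  rcases act_b K n (i+1) w with ⟨k, u, h1, rfl, h3⟩ | ⟨h1, h2⟩
  · obtain rfl : i = k := by omega
    rw [h3, map_neg, ext_s K n _ (nrm_cba n (by omega) hw)]
    simp [G2]
  · rw [h2, ext_s K n _ (w := .b (i+1) :: w) ⟨h1, hw⟩]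
    simp [G2]

end
end S5

/-- Lemma 3.1, exactness of `B² → B → B² → B` at the two middle positions,
where `φ (w, x) = w b_i c_i + x b_{i+1}` and `ψ z = (z a_i, z c_{i+1} a_{i+1})`. -/
theorem stmt_5 (K : Type) [Field K] (n : ℕ) (i : ℕ) (h1 : 1 ≤ i) (h2 : i ≤ n - 1) :
    -- (i) ker ψ = im φ
    (∀ z : B K n,
      (z * aB K n i = 0 ∧ z * (cB K n (i+1) * aB K n (i+1)) = 0) ↔
      (∃ w x : B K n, z = w * (bB K n i * cB K n i) + x * bB K n (i+1))) ∧
    -- (ii) ker φ = im ψ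
    (∀ w x : B K n,
      (w * (bB K n i * cB K n i) + x * bB K n (i+1) = 0) ↔
      (∃ z : B K n, w = z * aB K n i ∧ x = z * (cB K n (i+1) * aB K n (i+1)))) := by
  have hin : i < n := by omega
  have e : (i : ℤ) + 1 = ((i + 1 : ℕ) : ℤ) := by push_cast; rfl
  rw [e]
  obtain ⟨k, rfl⟩ : ∃ k, i = k + 1 := ⟨i - 1, by omega⟩
  set i := k + 1 with hi
  have B3 := S5.B3 K n i
  have B4 := S5.B4 K n i
  have B4' := S5.B4 K n k
  have B5 := S5.B5 K n i
  have B6 := S5.B6 K n i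
  rw [← hi] at B4'
  have nfA : ∀ (z : B K n) (j : ℕ), j ≤ n →
      S5.nf K n (z * aB K n j) = S5.act K n (.a j) (S5.nf K n z) := by
    intro z j hj
    rw [S5.nf, S5.E_mul, S5.E_a K n j hj]; rfl
  have nfB : ∀ (z : B K n) (j : ℕ), j ≤ n →
      S5.nf K n (z * bB K n j) = S5.act K n (.b j) (S5.nf K n z) := by
    intro z j hj
    rw [S5.nf, S5.E_mul, S5.E_b K n j hj]; rfl
  have nfC : ∀ (z : B K n) (j : ℕ), j ≤ n →
      S5.nf K n (z * cB K n j) = S5.act K n (.c j) (S5.nf K n z) := by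
    intro z j hj
    rw [S5.nf, S5.E_mul, S5.E_c K n j hj]; rfl
  have nf0 : S5.nf K n 0 = 0 := S5.E_zero K n _
  refine ⟨fun z => ⟨?_, ?_⟩, fun w x => ⟨?_, ?_⟩⟩
  · rintro ⟨hz, -⟩
    have h := S5.homotopy1 K n i h1 (S5.nf K n z)
    rw [← nfA z i hin.le, hz, nf0, map_zero, zero_add] at h
    have h' := congrArg (S5.ev K n) h
    rw [S5.ev_nf, map_add, S5.ev_act, S5.ev_act, S5.ev_act, mul_assoc] at h'
    exact ⟨_, _, h'⟩
  · rintro ⟨w, x, rfl⟩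
    constructor
    · rw [add_mul, mul_assoc, B4', mul_assoc, B6, mul_zero, mul_zero, add_zero]
    · have h1 : w * (bB K n i * cB K n i) * (cB K n (i + 1 : ℕ) * aB K n (i + 1 : ℕ)) =
        w * bB K n i * (cB K n i * cB K n (i + 1 : ℕ)) * aB K n (i + 1 : ℕ) := by
        simp only [mul_assoc]
      rw [add_mul, h1, B5, mul_assoc x, ← mul_assoc (bB K n _), B4, mul_zero, mul_zero,
        zero_mul, add_zero]
  · intro h
    have h0 := congrArg (S5.nf K n) h
    rw [nf0, S5.nf, S5.E_add] at h0
    change S5.nf K n _ + S5.nf K n _ = 0 at h0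
    rw [← mul_assoc, nfC _ _ hin.le, nfB _ _ hin.le, nfB _ _ hin] at h0
    have p1 := S5.homotopy2w K n i hin (S5.nf K n w)
    have p2 := S5.homotopy2w' K n i hin (S5.nf K n w)
    have p3 := S5.homotopy2x K n i hin (S5.nf K n x)
    have p4 := S5.homotopy2x' K n i hin (S5.nf K n x)
    have q1 := congrArg₂ (· + ·) p1 p3
    have q2 := congrArg₂ (· + ·) p2 p4
    simp only [add_assoc, ← map_add, h0, map_zero, add_zero, zero_add] at q1 q2
    refine ⟨S5.ev K n (S5.ext K n (S5.Dr K n i) (S5.nf K n w)), ?_, ?_⟩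
    · have := congrArg (S5.ev K n) q1
      rwa [S5.ev_nf, S5.ev_act] at this
    · have := congrArg (S5.ev K n) q2
      rwa [S5.ev_nf, S5.ev_act, S5.ev_act, mul_assoc] at this
  · rintro ⟨z, rfl, rfl⟩
    rw [mul_assoc, ← mul_assoc (aB K n i), mul_assoc z, ← mul_add, B3, mul_zero]
end

section
/- Let 1 ≤ i ≤ n−1. The 2-periodic complex of free left B-modules ⋯ → B → B² → B → B² → B → B a_i → 0, in which the differentials alternate between the map B → B², z ↦ (z a_i, z c_{i+1} a_{i+1}), and the map B² → B, (w, x) ↦ w b_i c_i + x b_{i+1}, and in which the augmentation B → B a_i is z ↦ z a_i (the differential immediately preceding the augmentation being (w,x) ↦ w b_i c_i + x b_{i+1}), is exact; i.e., it is a free resolution of the left ideal B a_i of B. -/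
namespace Aux7

inductive Lt : Type
  | a : ℕ → Lt
  | b : ℕ → Lt
  | c : ℕ → Lt

abbrev M (K : Type) [Field K] := List Lt →₀ K

lemma gen1 {R : Type} [Ring R] (w a b c a' b' c' : R) (h : a * b * c + c' * a' * b' = 0) :
    w * a * b * c = -(w * c' * a' * b') := by
  have h1 : w * (a * b * c + c' * a' * b') = 0 := by rw [h, mul_zero]
  rw [eq_neg_iff_add_eq_zero, ← h1]
  noncomm_ring

lemma gen2 {R : Type} [Ring R] (z x a b c a' b' c' : R) (h : a * b * c + c' * a' * b' = 0)
    (h' : z * a * (b * c) + x * b' = 0) : (x - z * (c' * a')) * b' = 0 := by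
  have h1 := gen1 z a b c a' b' c' h
  rw [← mul_assoc (z * a), h1] at h'
  rw [sub_mul, ← h', ← mul_assoc z]
  abel

open Classical in
noncomputable instance : DecidableEq Lt := fun _ _ => inferInstance

noncomputable section

variable (K : Type) [Field K] (n : ℕ)

def killA (j : ℕ) : List Lt → Prop
  | Lt.b k :: _ => k = j + 1
  | Lt.c k :: Lt.b l :: _ => k = j ∧ (l = j ∨ j = 0)
  | Lt.c k :: _ => k = j ∧ j = 0
  | _ => False

def bad (j : ℕ) : List Lt → Prop
  | Lt.b k :: _ => k = j + 1
  | Lt.c k :: _ => k = j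
  | _ => False

open Classical in
def fA (j : ℕ) (u : List Lt) : M K := if killA j u then 0 else Finsupp.single (Lt.a j :: u) 1

def fB (j : ℕ) (u : List Lt) : M K := Finsupp.single (Lt.b j :: u) 1

open Classical in
def fC (j : ℕ) : List Lt → M K
  | Lt.c k :: v => if k + 1 = j then 0 else Finsupp.single (Lt.c j :: Lt.c k :: v) 1
  | Lt.b k :: Lt.a l :: v =>
      if k = j ∧ l = j then
        (if n ≤ j ∨ bad j v then 0
          else - Finsupp.single (Lt.b (j+1) :: Lt.a (j+1) :: Lt.c (j+1) :: v) 1)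
      else Finsupp.single (Lt.c j :: Lt.b k :: Lt.a l :: v) 1
  | u => Finsupp.single (Lt.c j :: u) 1

def TA (j : ℕ) : Module.End K (M K) := Finsupp.linearCombination K (fA K j)
def TB (j : ℕ) : Module.End K (M K) := Finsupp.linearCombination K (fB K j)
def TC (j : ℕ) : Module.End K (M K) := Finsupp.linearCombination K (fC K n j)

lemma TA_s (j : ℕ) (u : List Lt) : TA K j (Finsupp.single u 1) = fA K j u := by simp [TA]
lemma TB_s (j : ℕ) (u : List Lt) :
    TB K j (Finsupp.single u 1) = Finsupp.single (Lt.b j :: u) 1 := by simp [TB, fB]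
lemma TC_s (j : ℕ) (u : List Lt) : TC K n j (Finsupp.single u 1) = fC K n j u := by simp [TC]

lemma rel_ba (j : ℕ) : TA K j * TB K (j+1) = 0 := by
  refine Finsupp.lhom_ext' fun u => LinearMap.ext_ring ?_
  simp [TA_s, TB_s, fA, killA]

lemma rel_cc (j : ℕ) : TC K n (j+1) * TC K n j = 0 := by
  refine Finsupp.lhom_ext' fun u => LinearMap.ext_ring ?_
  rcases u with _ | ⟨x | x | x, _ | ⟨y | y | y, u⟩⟩ <;> simp [TC_s, fC] <;> split_ifs <;>
    simp [TC_s, fC, bad]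

lemma rel_ca : TA K 0 * TC K n 0 = 0 := by
  refine Finsupp.lhom_ext' fun u => LinearMap.ext_ring ?_
  rcases u with _ | ⟨x | x | x, _ | ⟨y | y | y, u⟩⟩ <;> simp [TC_s, fC] <;> (try split_ifs) <;>
    simp [TA_s, fA, killA]

lemma rel_bca (j : ℕ) : TA K j * TC K n j * TB K j = 0 := by
  refine Finsupp.lhom_ext' fun u => LinearMap.ext_ring ?_
  rcases u with _ | ⟨x | x | x, u⟩ <;> simp [TB_s, TC_s, fC] <;> (try split_ifs) <;>
    simp [TA_s, fA, killA]

lemma rel_abc (j : ℕ) (hj : j < n) :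
    TC K n j * TB K j * TA K j + TB K (j+1) * TA K (j+1) * TC K n (j+1) = 0 := by
  have hj' : ¬ n ≤ j := by omega
  refine Finsupp.lhom_ext' fun u => LinearMap.ext_ring ?_
  simp only [LinearMap.comp_apply, LinearMap.add_apply, Module.End.mul_apply,
    Finsupp.lsingle_apply, TA_s, TC_s, LinearMap.zero_apply]
  by_cases hk : killA j u
  · rw [fA, if_pos hk, map_zero, map_zero, zero_add]
    have : TA K (j+1) (fC K n (j+1) u) = 0 := by
      rcases u with _ | ⟨x | x | x, _ | ⟨y | y | y, u⟩⟩ <;> simp only [killA] at hk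
      any_goals
        obtain ⟨rfl, hk⟩ := hk
        simp [fC]
        done
      all_goals
        subst hk
        simp only [fC]
        try split_ifs
        all_goals simp [TA_s, fA, killA]
    rw [this, map_zero]
  · rw [fA, if_neg hk, TB_s, TC_s]
    by_cases hb : bad j u
    · have h1 : fC K n (j+1) u = 0 := by
        rcases u with _ | ⟨x | x | x, u⟩ <;> simp only [bad] at hb
        · exact absurd hb (by simpa [killA] using hk)
        · subst hb; simp [fC]
      rw [h1]
      simp [fC, hb]
    · have h1 : fC K n (j+1) u = Finsupp.single (Lt.c (j+1) :: u) 1 := by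
        rcases u with _ | ⟨x | x | x, _ | ⟨y | y | y, u⟩⟩ <;> simp only [bad] at hb <;>
          simp [fC, hb]
      have h2 : ¬ killA (j+1) (Lt.c (j+1) :: u) := by
        rcases u with _ | ⟨x | x | x, u⟩ <;> simp only [bad] at hb <;> simp [killA, hb]
      rw [h1, TA_s, fA, if_neg h2, TB_s]
      simp [fC, hb, hj']

lemma rel_abcn : TC K n n * TB K n * TA K n = 0 := by
  refine Finsupp.lhom_ext' fun u => LinearMap.ext_ring ?_
  simp only [LinearMap.comp_apply, Module.End.mul_apply,
      Finsupp.lsingle_apply, TA_s, fA]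
  split_ifs <;> simp [TB_s, TC_s, fC]

/-- the action of generators -/
def genOp : Gen n → (Module.End K (M K))ᵐᵒᵖ
  | Gen.a j => MulOpposite.op (TA K j)
  | Gen.b j => MulOpposite.op (TB K j)
  | Gen.c j => MulOpposite.op (TC K n j)

def rho0 : FA K n →ₐ[K] (Module.End K (M K))ᵐᵒᵖ := FreeAlgebra.lift K (genOp K n)

lemma ga_nat (j : ℕ) (h : j ≤ n) : ga K n j = FreeAlgebra.ι K (Gen.a ⟨j, by omega⟩) := by
  simp [ga, h]
lemma gb_nat (j : ℕ) (h : j ≤ n) : gb K n j = FreeAlgebra.ι K (Gen.b ⟨j, by omega⟩) := by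
  simp [gb, h]
lemma gc_nat (j : ℕ) (h : j ≤ n) : gc K n j = FreeAlgebra.ι K (Gen.c ⟨j, by omega⟩) := by
  simp [gc, h]

lemma rho0_a (j : ℕ) (h : j ≤ n) : rho0 K n (ga K n j) = MulOpposite.op (TA K j) := by
  rw [ga_nat K n j h, rho0, FreeAlgebra.lift_ι_apply]; rfl
lemma rho0_b (j : ℕ) (h : j ≤ n) : rho0 K n (gb K n j) = MulOpposite.op (TB K j) := by
  rw [gb_nat K n j h, rho0, FreeAlgebra.lift_ι_apply]; rfl
lemma rho0_c (j : ℕ) (h : j ≤ n) : rho0 K n (gc K n j) = MulOpposite.op (TC K n j) := by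
  rw [gc_nat K n j h, rho0, FreeAlgebra.lift_ι_apply]; rfl

lemma rho0_rel (x y : FA K n) (h : BRel K n x y) : rho0 K n x = rho0 K n y := by
  obtain ⟨h, rfl⟩ := h
  rw [map_zero]
  have key : MulOpposite.unop (rho0 K n x) = 0 := by
    rcases h with rfl | rfl | ⟨i, hi, h⟩
    · simp only [map_mul, rho0_a K n n le_rfl, rho0_b K n n le_rfl, rho0_c K n n le_rfl,
        MulOpposite.unop_mul, MulOpposite.unop_op, ← mul_assoc]
      exact rel_abcn K n
    · have ha := rho0_a K n 0 (Nat.zero_le _)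
      have hc := rho0_c K n 0 (Nat.zero_le _)
      simp only [Nat.cast_zero] at ha hc
      simp only [map_mul, ha, hc, MulOpposite.unop_mul, MulOpposite.unop_op]
      exact rel_ca K n
    · have ha := rho0_a K n i hi.le
      have hb := rho0_b K n i hi.le
      have hc := rho0_c K n i hi.le
      have ha' := rho0_a K n (i+1) hi
      have hb' := rho0_b K n (i+1) hi
      have hc' := rho0_c K n (i+1) hi
      simp only [Nat.cast_add, Nat.cast_one] at ha' hb' hc'
      rcases h with rfl | rfl | rfl | rfl <;>
      simp only [map_mul, map_add, ha, hb, hc, ha', hb', hc', MulOpposite.unop_mul,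
        MulOpposite.unop_add, MulOpposite.unop_op, ← mul_assoc]
      · exact rel_abc K n i hi
      · exact rel_bca K n (i+1)
      · exact rel_cc K n i
      · exact rel_ba K i
  exact MulOpposite.unop_injective key

def rho : B K n →ₐ[K] (Module.End K (M K))ᵐᵒᵖ :=
  RingQuot.liftAlgHom K ⟨rho0 K n, fun _ _ h => rho0_rel K n _ _ h⟩

lemma rho_pi (x : FA K n) : rho K n (πB K n x) = rho0 K n x := by
  simp [rho, πB]

def phi (x : B K n) : M K := MulOpposite.unop (rho K n x) (Finsupp.single [] 1)

lemma phi_mul (x y : B K n) : phi K n (x * y) = MulOpposite.unop (rho K n y) (phi K n x) := by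
  simp [phi]

lemma phi_add (x y : B K n) : phi K n (x + y) = phi K n x + phi K n y := by
  simp [phi]

lemma phi_zero : phi K n 0 = 0 := by simp [phi]

lemma phi_a (x : B K n) (j : ℕ) (h : j ≤ n) : phi K n (x * aB K n j) = TA K j (phi K n x) := by
  rw [phi_mul, aB, rho_pi, rho0_a K n j h]; rfl
lemma phi_b (x : B K n) (j : ℕ) (h : j ≤ n) : phi K n (x * bB K n j) = TB K j (phi K n x) := by
  rw [phi_mul, bB, rho_pi, rho0_b K n j h]; rfl
lemma phi_c (x : B K n) (j : ℕ) (h : j ≤ n) : phi K n (x * cB K n j) = TC K n j (phi K n x) := by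
  rw [phi_mul, cB, rho_pi, rho0_c K n j h]; rfl

/-! relations in B -/
lemma aB_big (j : ℕ) (h : n < j) : aB K n j = 0 := by
  have : ¬ (j ≤ n) := by omega
  simp [aB, ga, this]
lemma bB_big (j : ℕ) (h : n < j) : bB K n j = 0 := by
  have : ¬ (j ≤ n) := by omega
  simp [bB, gb, this]
lemma cB_big (j : ℕ) (h : n < j) : cB K n j = 0 := by
  have : ¬ (j ≤ n) := by omega
  simp [cB, gc, this]

lemma pi_rel (x : FA K n) (h : x ∈ rels K n) : πB K n x = 0 := by
  rw [← map_zero (πB K n)]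
  exact RingQuot.mkAlgHom_rel K ⟨h, rfl⟩

lemma B_ba (j : ℕ) : bB K n (j+1 : ℕ) * aB K n j = 0 := by
  by_cases h : j < n
  · simp only [aB, bB, ← map_mul]
    exact pi_rel K n _ (Or.inr (Or.inr ⟨j, h, by simp⟩))
  · rw [bB_big K n (j+1) (by omega), zero_mul]
lemma B_cc (j : ℕ) : cB K n j * cB K n (j+1 : ℕ) = 0 := by
  by_cases h : j < n
  · simp only [cB, ← map_mul]
    exact pi_rel K n _ (Or.inr (Or.inr ⟨j, h, by simp⟩))
  · rw [cB_big K n (j+1) (by omega), mul_zero]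
lemma B_bca (j : ℕ) : bB K n (j+1 : ℕ) * cB K n (j+1 : ℕ) * aB K n (j+1 : ℕ) = 0 := by
  by_cases h : j < n
  · simp only [aB, bB, cB, ← map_mul]
    exact pi_rel K n _ (Or.inr (Or.inr ⟨j, h, by simp⟩))
  · rw [cB_big K n (j+1) (by omega), mul_zero, zero_mul]
lemma B_ca : cB K n (0 : ℕ) * aB K n (0 : ℕ) = 0 := by
  simp only [aB, cB, ← map_mul]
  exact pi_rel K n _ (Or.inr (Or.inl (by simp)))
lemma B_abc (j : ℕ) : aB K n j * bB K n j * cB K n j +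
    cB K n (j+1 : ℕ) * aB K n (j+1 : ℕ) * bB K n (j+1 : ℕ) = 0 := by
  rcases lt_trichotomy j n with h | h | h
  · simp only [aB, bB, cB, ← map_mul, ← map_add]
    exact pi_rel K n _ (Or.inr (Or.inr ⟨j, h, by simp⟩))
  · subst h
    rw [cB_big K j (j+1) (by omega), zero_mul, zero_mul, add_zero]
    simp only [aB, bB, cB, ← map_mul]
    exact pi_rel K j _ (Or.inl rfl)
  · rw [cB_big K n (j+1) (by omega), cB_big K n j h]; simp

def letter : Lt → B K n
  | Lt.a j => aB K n j
  | Lt.b j => bB K n j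
  | Lt.c j => cB K n j

def word : List Lt → B K n
  | [] => 1
  | x :: u => word u * letter K n x

def psi : M K →ₗ[K] B K n := Finsupp.linearCombination K (word K n)

lemma psi_s (u : List Lt) : psi K n (Finsupp.single u 1) = word K n u := by simp [psi]

lemma killA_word (j : ℕ) (u : List Lt) (h : killA j u) : word K n u * aB K n j = 0 := by
  have hb := B_ba K n
  have hbc := B_bca K n
  have hc := B_ca K n
  rcases u with _ | ⟨x | x | x, _ | ⟨y | y | y, u⟩⟩ <;> simp only [killA] at h <;>
    try (subst h; simp only [word, letter, mul_assoc, hb, mul_zero])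
  all_goals
    obtain ⟨rfl, h⟩ := h
    first
    | (subst h; simp only [word, letter, mul_assoc, hc, mul_zero]; done)
    | (rcases h with h | h
       · subst h
         rcases y with _ | y
         · simp only [word, letter, mul_assoc, hc, mul_zero]
         · have := hbc y
           rw [mul_assoc] at this
           simp only [word, letter, mul_assoc, this, mul_zero]
       · subst h; simp only [word, letter, mul_assoc, hc, mul_zero])

lemma psi_TA (j : ℕ) (m : M K) : psi K n (TA K j m) = psi K n m * aB K n j := by
  have : psi K n ∘ₗ TA K j = LinearMap.mulRight K (aB K n j) ∘ₗ psi K n := by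
    refine Finsupp.lhom_ext' fun u => LinearMap.ext_ring ?_
    simp only [LinearMap.comp_apply, Finsupp.lsingle_apply, TA_s, psi_s, fA,
      LinearMap.mulRight_apply]
    split_ifs with h
    · rw [killA_word K n j u h, map_zero]
    · rw [psi_s]; rfl
  exact LinearMap.congr_fun this m

lemma psi_TB (j : ℕ) (m : M K) : psi K n (TB K j m) = psi K n m * bB K n j := by
  have : psi K n ∘ₗ TB K j = LinearMap.mulRight K (bB K n j) ∘ₗ psi K n := by
    refine Finsupp.lhom_ext' fun u => LinearMap.ext_ring ?_
    simp only [LinearMap.comp_apply, Finsupp.lsingle_apply, TB_s, psi_s, 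
      LinearMap.mulRight_apply]
    rfl
  exact LinearMap.congr_fun this m

lemma bad_word (j : ℕ) (u : List Lt) (h : n ≤ j ∨ bad j u) :
    word K n u * (cB K n (j+1 : ℕ) * aB K n (j+1 : ℕ)) = 0 := by
  rcases h with h | h
  · rw [cB_big K n (j+1) (by omega)]; simp
  · have h1 := B_cc K n j
    have h2 := B_bca K n j
    rcases u with _ | ⟨x | x | x, u⟩ <;> simp only [bad] at h
    · subst h
      rw [word, letter, mul_assoc, ← mul_assoc (bB _ _ _), h2, mul_zero]
    · subst h
      rw [word, letter, mul_assoc, ← mul_assoc (cB _ _ _), h1, zero_mul, mul_zero]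

lemma psi_TC (j : ℕ) (m : M K) : psi K n (TC K n j m) = psi K n m * cB K n j := by
  have : psi K n ∘ₗ TC K n j = LinearMap.mulRight K (cB K n j) ∘ₗ psi K n := by
    refine Finsupp.lhom_ext' fun u => LinearMap.ext_ring ?_
    simp only [LinearMap.comp_apply, Finsupp.lsingle_apply, TC_s, psi_s, 
      LinearMap.mulRight_apply]
    unfold fC
    split
    · split_ifs with h
      · subst h
        rw [word, letter, mul_assoc, B_cc, mul_zero, map_zero]
      · rw [psi_s]; rfl
    · split_ifs with h h'
      · obtain ⟨rfl, rfl⟩ := h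
        have := bad_word K n _ _ h'
        rw [map_zero]
        refine Eq.symm ((gen1 _ _ _ _ _ _ _ (B_abc K n _)).trans ?_)
        rw [mul_assoc (word _ _ _), this, zero_mul, neg_zero]
      · obtain ⟨rfl, rfl⟩ := h
        rw [map_neg, psi_s]
        exact Eq.symm (gen1 _ _ _ _ _ _ _ (B_abc K n _))
      · rw [psi_s]; rfl
    · rw [psi_s]; rfl
  exact LinearMap.congr_fun this m

lemma psi_rho (y : B K n) : ∀ m, psi K n (MulOpposite.unop (rho K n y) m) = psi K n m * y := by
  obtain ⟨y, rfl⟩ := RingQuot.mkAlgHom_surjective K (BRel K n) y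
  change ∀ m, psi K n (MulOpposite.unop (rho K n (πB K n y)) m) = psi K n m * (πB K n y)
  induction y using FreeAlgebra.induction with
  | grade0 r =>
    intro m
    simp [Algebra.algebraMap_eq_smul_one]
  | grade1 x =>
    intro m
    rw [rho_pi, rho0, FreeAlgebra.lift_ι_apply]
    rcases x with x | x | x
    · have := psi_TA K n x m
      rwa [aB, ga_nat K n x (by omega)] at this
    · have := psi_TB K n x m
      rwa [bB, gb_nat K n x (by omega)] at this
    · have := psi_TC K n x m
      rwa [cB, gc_nat K n x (by omega)] at this
  | mul x y hx hy => intro m; simp [hx, hy, mul_assoc]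
  | add x y hx hy => intro m; simp [hx, hy, mul_add]

lemma psi_phi (x : B K n) : psi K n (phi K n x) = x := by
  rw [phi, psi_rho, psi_s, word, one_mul]

open Classical in
lemma coef_A (j : ℕ) (u : List Lt) (m : M K) :
    TA K j m (Lt.a j :: u) = if killA j u then 0 else m u := by
  induction m using Finsupp.induction_linear with
  | zero => simp
  | add f g hf hg => rw [map_add, Finsupp.add_apply, hf, hg]; split_ifs <;> simp
  | single v r =>
    simp only [TA, Finsupp.linearCombination_single, fA]
    by_cases h : v = u
    · subst h; split_ifs <;> simp
    · split_ifs <;> simp [Finsupp.single_apply, h]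

lemma coef_B (j : ℕ) (u : List Lt) (m : M K) : TB K j m (Lt.b j :: u) = m u := by
  induction m using Finsupp.induction_linear with
  | zero => simp
  | add f g hf hg => rw [map_add, Finsupp.add_apply, hf, hg]; simp
  | single v r => simp [TB, fB, Finsupp.single_apply]

lemma coef_B' (j k l : ℕ) (u : List Lt) (m : M K) : TB K j m (Lt.c k :: Lt.b l :: u) = 0 := by
  induction m using Finsupp.induction_linear with
  | zero => simp
  | add f g hf hg => rw [map_add, Finsupp.add_apply, hf, hg]; simp
  | single v r => simp [TB, fB, Finsupp.single_apply]

lemma coef_BC (j : ℕ) (u : List Lt) (hu : ∀ v, u ≠ Lt.a j :: v) (m : M K) :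
    TC K n j (TB K j m) (Lt.c j :: Lt.b j :: u) = m u := by
  induction m using Finsupp.induction_linear with
  | zero => simp
  | add f g hf hg => rw [map_add, map_add, Finsupp.add_apply, hf, hg]; simp
  | single v r =>
    have e : Finsupp.single v r = r • (Finsupp.single v 1 : M K) := by simp
    rw [e, map_smul, map_smul, TB_s, TC_s, Finsupp.smul_apply, Finsupp.smul_apply]
    congr 1
    rcases v with _ | ⟨x | x | x, v⟩
    · simp [fC, Finsupp.single_apply]
    · by_cases hx : x = j
      · subst hx
        have h1 := hu v
        have : (Finsupp.single (Lt.a x :: v) 1 : M K) u = 0 := by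
          rw [Finsupp.single_apply, if_neg (fun h => h1 h.symm)]
        rw [this]
        simp only [fC]
        split_ifs <;> simp_all [Finsupp.single_apply]
      · simp [fC, hx, Finsupp.single_apply]
    · simp [fC, Finsupp.single_apply]
    · simp [fC, Finsupp.single_apply]

lemma psi_mem (I : Ideal (B K n)) (m : M K) (h : ∀ u, m u ≠ 0 → word K n u ∈ I) :
    psi K n m ∈ I := by
  rw [psi, Finsupp.linearCombination_apply, Finsupp.sum]
  refine Ideal.sum_mem _ fun u hu => ?_
  rw [← one_mul (word K n u), ← smul_mul_assoc]
  exact I.mul_mem_left _ (h u (Finsupp.mem_support_iff.1 hu))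

lemma ker_a (i : ℕ) (h1 : 1 ≤ i) (h2 : i + 1 ≤ n) (z : B K n) (hz : z * aB K n i = 0) :
    ∃ w x : B K n, z = w * (bB K n i * cB K n i) + x * bB K n (i+1) := by
  have h0 : TA K i (phi K n z) = 0 := by
    rw [← phi_a K n z i (by omega), hz, phi_zero]
  have hm : psi K n (phi K n z) ∈ Ideal.span {bB K n i * cB K n i, bB K n (i+1)} := by
    apply psi_mem
    intro u hu
    have hk : killA i u := by
      by_contra hk
      apply hu
      have := coef_A K i u (phi K n z)
      rw [h0, if_neg hk] at this
      simpa using this.symm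
    have hi0 : i ≠ 0 := by omega
    rcases u with _ | ⟨x | x | x, _ | ⟨y | y | y, u⟩⟩ <;> simp [killA, hi0] at hk
    any_goals
      subst hk
      rw [word, letter]
      exact Ideal.mul_mem_left _ _ (Ideal.subset_span (by simp))
    obtain ⟨rfl, rfl⟩ := hk
    rw [word, word, letter, letter, mul_assoc]
    exact Ideal.mul_mem_left _ _ (Ideal.subset_span (by simp))
  rw [psi_phi, Ideal.mem_span_pair] at hm
  obtain ⟨w, x, h⟩ := hm
  exact ⟨w, x, h.symm⟩

lemma mid (i : ℕ) (h2 : i + 1 ≤ n) (w x : B K n)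
    (h : w * (bB K n i * cB K n i) + x * bB K n (i+1) = 0) :
    ∃ z : B K n, w = z * aB K n i ∧ x = z * (cB K n (i+1) * aB K n (i+1)) := by
  have hb : ∀ x : B K n, phi K n (x * bB K n (i+1)) = TB K (i+1) (phi K n x) := by
    intro x
    have := phi_b K n x (i+1) h2
    simpa using this
  have h0 : TC K n i (TB K i (phi K n w)) + TB K (i+1) (phi K n x) = 0 := by
    rw [← phi_b K n w i (by omega), ← phi_c K n _ i (by omega), ← hb, ← phi_add, mul_assoc, h,
      phi_zero]
  have hm : psi K n (phi K n w) ∈ Ideal.span {aB K n i} := by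
    apply psi_mem
    intro u hu
    have : ∃ v, u = Lt.a i :: v := by
      by_contra hk
      push Not at hk
      apply hu
      have h3 := coef_BC K n i u hk (phi K n w)
      have h4 := DFunLike.congr_fun h0 (Lt.c i :: Lt.b i :: u)
      rw [Finsupp.add_apply, coef_B', h3, add_zero] at h4
      exact h4
    obtain ⟨v, rfl⟩ := this
    rw [word, letter]
    exact Ideal.mul_mem_left _ _ (Ideal.subset_span (by simp))
  rw [psi_phi, Ideal.mem_span_singleton'] at hm
  obtain ⟨z, rfl⟩ := hm
  refine ⟨z, rfl, ?_⟩
  have h5 : (x - z * (cB K n (i+1) * aB K n (i+1))) * bB K n (i+1) = 0 := by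
    have h6 := B_abc K n i
    push_cast at h6
    exact gen2 _ _ _ _ _ _ _ _ h6 h
  have h6 : phi K n (x - z * (cB K n (i+1) * aB K n (i+1))) = 0 := by
    ext u
    rw [← coef_B K (i+1) u, ← hb, h5, phi_zero]; rfl
  have h7 := psi_phi K n (x - z * (cB K n (i+1) * aB K n (i+1)))
  rw [h6, map_zero] at h7
  exact sub_eq_zero.1 h7.symm

end

end Aux7

/-- for `1 ≤ i ≤ n-1`, the 2-periodic complex
`⋯ → B → B² → B → B² → B → B a_i → 0`, with differentials alternating between
`z ↦ (z a_i, z c_{i+1} a_{i+1})` and `(w, x) ↦ w b_i c_i + x b_{i+1}`, and augmentation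
`z ↦ z a_i`, is exact, i.e. it is a free resolution of `B a_i`. -/
theorem stmt_7 (K : Type) [Field K] (n : ℕ) (i : ℕ) (h1 : 1 ≤ i) (h2 : i ≤ n - 1) :
    -- the augmentation `z ↦ z a_i` maps onto the left ideal `B a_i`
    (∀ y, y ∈ Ideal.span {aB K n i} ↔ ∃ z : B K n, y = z * aB K n i) ∧
    -- exactness at the augmentation spot: ker(z ↦ z a_i) = im((w,x) ↦ w b_i c_i + x b_{i+1})
    (∀ z : B K n, z * aB K n i = 0 ↔
      ∃ w x : B K n, z = w * (bB K n i * cB K n i) + x * bB K n (i+1)) ∧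
    -- exactness at the `B²` spots: ker((w,x) ↦ w b_i c_i + x b_{i+1}) = im(z ↦ (z a_i, z c_{i+1} a_{i+1}))
    (∀ w x : B K n,
      (w * (bB K n i * cB K n i) + x * bB K n (i+1) = 0) ↔
      (∃ z : B K n, w = z * aB K n i ∧ x = z * (cB K n (i+1) * aB K n (i+1)))) ∧
    -- exactness at the `B` spots: ker(z ↦ (z a_i, z c_{i+1} a_{i+1})) = im((w,x) ↦ w b_i c_i + x b_{i+1})
    (∀ z : B K n,
      (z * aB K n i = 0 ∧ z * (cB K n (i+1) * aB K n (i+1)) = 0) ↔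
      (∃ w x : B K n, z = w * (bB K n i * cB K n i) + x * bB K n (i+1))) := by
  have hn : i + 1 ≤ n := by omega
  have e1 := Aux7.B_ba K n i
  have e2 := Aux7.B_cc K n i
  have e3 := Aux7.B_bca K n i
  have e4 := Aux7.B_abc K n i
  have e5 : bB K n i * cB K n i * aB K n i = 0 := by
    obtain ⟨j, rfl⟩ : ∃ j, i = j + 1 := ⟨i - 1, by omega⟩
    exact Aux7.B_bca K n j
  push_cast at e1 e2 e3 e4
  have c1 : ∀ w x : B K n, (w * (bB K n i * cB K n i) + x * bB K n (i+1)) * aB K n i = 0 := by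
    intro w x
    rw [add_mul, mul_assoc, e5, mul_assoc, e1]; simp
  refine ⟨?_, ?_, ?_, ?_⟩
  · intro y
    rw [Ideal.mem_span_singleton']
    exact ⟨fun ⟨z, h⟩ => ⟨z, h.symm⟩, fun ⟨z, h⟩ => ⟨z, h.symm⟩⟩
  · intro z
    refine ⟨Aux7.ker_a K n i h1 hn z, ?_⟩
    rintro ⟨w, x, rfl⟩
    exact c1 w x
  · intro w x
    refine ⟨Aux7.mid K n i hn w x, ?_⟩
    rintro ⟨z, rfl, rfl⟩
    calc _ = z * (aB K n i * bB K n i * cB K n i +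
            cB K n (i+1) * aB K n (i+1) * bB K n (i+1)) := by noncomm_ring
      _ = 0 := by rw [e4, mul_zero]
  · intro z
    refine ⟨fun h => Aux7.ker_a K n i h1 hn z h.1, ?_⟩
    rintro ⟨w, x, rfl⟩
    refine ⟨c1 w x, ?_⟩
    calc _ = w * bB K n i * (cB K n i * cB K n (i+1)) * aB K n (i+1) +
          x * (bB K n (i+1) * cB K n (i+1) * aB K n (i+1)) := by noncomm_ring
      _ = 0 := by rw [e2, e3]; simp
end

section
/- Let 1 ≤ i ≤ n and let w, x ∈ B satisfy w c_i a_i b_i + x c_{i−1} = 0. Then there exist w', w'', x' ∈ B such that w = w' + w'' c_{i−1} and x = w' a_{i−1} b_{i−1} + x' c_{i−2} (here c_{i−2} = 0 when i = 1, by the stated conventions). -/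
noncomputable section

section aux

set_option linter.unusedSectionVars false

variable {K : Type} [Field K] {n : ℕ}

theorem piB_rel {x : FA K n} (hx : x ∈ rels K n) : πB K n x = 0 := by
  have := RingQuot.mkAlgHom_rel K (s := BRel K n) (x := x) (y := 0) ⟨hx, rfl⟩
  simpa [πB] using this

theorem rel_c0a0 : cB K n 0 * aB K n 0 = 0 := by
  have := piB_rel (K := K) (n := n) (x := gc K n 0 * ga K n 0) (Or.inr (Or.inl rfl))
  simpa [cB, aB] using this

theorem rel_abn : aB K n n * bB K n n * cB K n n = 0 := by
  have := piB_rel (K := K) (n := n) (x := ga K n n * gb K n n * gc K n n) (Or.inl rfl)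
  simpa [cB, aB, bB] using this

theorem rel_abc (i : ℤ) (h0 : 0 ≤ i) (h1 : i < n) :
    aB K n i * bB K n i * cB K n i + cB K n (i+1) * aB K n (i+1) * bB K n (i+1) = 0 := by
  lift i to ℕ using h0
  have := piB_rel (K := K) (n := n) (Or.inr (Or.inr ⟨i, by omega, Or.inl rfl⟩))
  simpa [cB, aB, bB] using this

theorem rel_bca (i : ℤ) (h0 : 0 ≤ i) (h1 : i < n) :
    bB K n (i+1) * cB K n (i+1) * aB K n (i+1) = 0 := by
  lift i to ℕ using h0
  have := piB_rel (K := K) (n := n) (Or.inr (Or.inr ⟨i, by omega, Or.inr (Or.inl rfl)⟩))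
  simpa [cB, aB, bB] using this

theorem rel_cc (i : ℤ) (h0 : 0 ≤ i) (h1 : i < n) :
    cB K n i * cB K n (i+1) = 0 := by
  lift i to ℕ using h0
  have := piB_rel (K := K) (n := n) (Or.inr (Or.inr ⟨i, by omega, Or.inr (Or.inr (Or.inl rfl))⟩))
  simpa [cB, aB, bB] using this

theorem rel_ba (i : ℤ) (h0 : 0 ≤ i) (h1 : i < n) :
    bB K n (i+1) * aB K n i = 0 := by
  lift i to ℕ using h0
  have := piB_rel (K := K) (n := n) (Or.inr (Or.inr ⟨i, by omega, Or.inr (Or.inr (Or.inr rfl))⟩))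
  simpa [cB, aB, bB] using this

variable {M : Type} [AddCommGroup M] [Module (B K n) M] [Module K M] [IsScalarTower K (B K n) M]

theorem sc (x : B K n) (k : K) (m : M) : x • k • m = k • x • m := smul_comm _ _ _

variable (K n M) in
def opA (j i : ℤ) : Module.End K (M × K × K × K) where
  toFun v := (aB K n i • v.1, 0, 0, if i = j + 1 then v.2.2.1 else 0)
  map_add' u v := by split_ifs <;> simp
  map_smul' k v := by split_ifs <;> simp [sc]

variable (K n M) in
def opB (j i : ℤ) : Module.End K (M × K × K × K) where
  toFun v := (bB K n i • v.1, 0, if i = j + 1 then v.2.1 else 0, 0)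
  map_add' u v := by split_ifs <;> simp
  map_smul' k v := by split_ifs <;> simp [sc]

variable (K n) in
def opC (s : M) (j i : ℤ) : Module.End K (M × K × K × K) where
  toFun v := (cB K n i • v.1 + (if i = j then v.2.1 else 0) • s
    - (if i = j + 1 then v.2.2.2 else 0) • ((aB K n j * bB K n j) • s), 0, 0, 0)
  map_add' u v := by
    split_ifs <;> simp [add_smul] <;> abel
  map_smul' k v := by
    split_ifs <;> simp [sc, smul_sub, smul_add, mul_smul]

variable (K n) in
def opG (s : M) (j : ℤ) : Gen n → Module.End K (M × K × K × K)
  | Gen.a i => opA K n M j (i : ℕ)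
  | Gen.b i => opB K n M j (i : ℕ)
  | Gen.c i => opC K n s j (i : ℕ)

variable (K n) in
def liftF (s : M) (j : ℤ) : FA K n →ₐ[K] Module.End K (M × K × K × K) :=
  FreeAlgebra.lift K (opG K n s j)

theorem liftF_a (s : M) (j i : ℤ) (h0 : 0 ≤ i) (h1 : i ≤ n) :
    liftF K n s j (ga K n i) = opA K n M j i := by
  simp [liftF, ga, h0, h1, opG]

theorem liftF_b (s : M) (j i : ℤ) (h0 : 0 ≤ i) (h1 : i ≤ n) :
    liftF K n s j (gb K n i) = opB K n M j i := by
  simp [liftF, gb, h0, h1, opG]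

theorem liftF_c (s : M) (j i : ℤ) (h0 : 0 ≤ i) (h1 : i ≤ n) :
    liftF K n s j (gc K n i) = opC K n s j i := by
  simp [liftF, gc, h0, h1, opG]

theorem liftF_rel (s : M) (j : ℤ) (h0 : 0 ≤ j) (h1 : j < n)
    (hs : cB K n (j - 1) • s = 0) (x : FA K n) (hx : x ∈ rels K n) :
    liftF K n s j x = 0 := by
  have hcab : cB K n j • aB K n j • bB K n j • s = 0 := by
    by_cases hj : j = 0
    · subst hj
      rw [← mul_smul, rel_c0a0, zero_smul]
    · have := rel_abc (K := K) (n := n) (j - 1) (by omega) (by omega)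
      rw [sub_add_cancel] at this
      have := congrArg (· • s) this
      simpa [add_smul, mul_smul, hs] using this
  have hba : ∀ i : ℤ, 0 ≤ i → i < n → ∀ m : M, bB K n (i+1) • aB K n i • m = 0 := by
    intro i hi hi' m
    rw [← mul_smul, rel_ba i hi hi', zero_smul]
  rcases hx with rfl | rfl | ⟨i, hi, rfl | rfl | rfl | rfl⟩
  · simp only [map_mul]
    rw [liftF_a _ _ _ (by omega) (by omega), liftF_b _ _ _ (by omega) (by omega),
      liftF_c _ _ _ (by omega) (by omega)]
    refine LinearMap.ext fun v => ?_
    obtain ⟨m, p, q, r⟩ := v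
    have e : aB K n n • bB K n n • cB K n n • m = 0 := by
      rw [← mul_smul, ← mul_smul, rel_abn, zero_smul]
    have hne : (n : ℤ) ≠ j := by omega
    by_cases hj : (n : ℤ) = j + 1
    · have := hba j h0 h1
      rw [hj] at e
      simp [opA, opB, opC, hj, smul_sub, smul_add, mul_smul, e, this, sc]
    · simp [opA, opB, opC, hj, hne, e]
  · simp only [map_mul]
    rw [liftF_a _ _ _ (by omega) (by omega), liftF_c _ _ _ (by omega) (by omega)]
    refine LinearMap.ext fun v => ?_
    obtain ⟨m, p, q, r⟩ := v
    have e : cB K n 0 • aB K n 0 • m = 0 := by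
      rw [← mul_smul, rel_c0a0, zero_smul]
    have hne : (0 : ℤ) ≠ j + 1 := by omega
    simp [opA, opC, hne, e]
  · simp only [map_mul, map_add]
    rw [liftF_a _ _ _ (by omega) (by omega), liftF_b _ _ _ (by omega) (by omega),
      liftF_c _ _ _ (by omega) (by omega), liftF_a _ _ _ (by omega) (by omega),
      liftF_b _ _ _ (by omega) (by omega), liftF_c _ _ _ (by omega) (by omega)]
    refine LinearMap.ext fun v => ?_
    obtain ⟨m, p, q, r⟩ := v
    have e : aB K n i • bB K n i • cB K n i • m
        + cB K n (i+1) • aB K n (i+1) • bB K n (i+1) • m = 0 := by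
      have := congrArg (· • m) (rel_abc (K := K) (n := n) i (by omega) (by omega))
      simpa [add_smul, mul_smul] using this
    by_cases hj : (i : ℤ) = j
    · have := hba j h0 h1
      rw [hj] at e
      simp [opA, opB, opC, hj, smul_add, mul_smul, sc]
      exact e
    · by_cases hj' : (i : ℤ) = j + 1
      · have := hba j h0 h1
        rw [hj'] at e
        simp [opA, opB, opC, hj', smul_sub, mul_smul, e, this, sc]
      · simp [opA, opB, opC, hj, hj', e]
  · simp only [map_mul]
    rw [liftF_b _ _ _ (by omega) (by omega),
      liftF_c _ _ _ (by omega) (by omega), liftF_a _ _ _ (by omega) (by omega)]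
    refine LinearMap.ext fun v => ?_
    obtain ⟨m, p, q, r⟩ := v
    have e : bB K n (i+1) • cB K n (i+1) • aB K n (i+1) • m = 0 := by
      rw [← mul_smul, ← mul_smul, rel_bca _ (by omega) (by omega), zero_smul]
    by_cases hj : (i : ℤ) = j
    · have := hba j h0 h1
      rw [hj] at e
      simp [opA, opB, opC, hj, smul_sub, mul_smul, e, this, sc]
    · simp [opA, opB, opC, hj, e]
  · simp only [map_mul]
    rw [liftF_c _ _ _ (by omega) (by omega), liftF_c _ _ _ (by omega) (by omega)]
    refine LinearMap.ext fun v => ?_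
    obtain ⟨m, p, q, r⟩ := v
    have e : cB K n i • cB K n (i+1) • m = 0 := by
      rw [← mul_smul, rel_cc _ (by omega) (by omega), zero_smul]
    by_cases hj : (i : ℤ) = j
    · rw [hj] at e
      simp [opC, hj, smul_sub, mul_smul, e, sc, hcab]
    · by_cases hj' : (i : ℤ) + 1 = j
      · have : (i : ℤ) = j - 1 := by omega
        rw [hj', this] at e
        simp [opC, this, e, sc, hs]
      · simp [opC, hj, hj', e]
  · simp only [map_mul]
    rw [liftF_b _ _ _ (by omega) (by omega), liftF_a _ _ _ (by omega) (by omega)]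
    refine LinearMap.ext fun v => ?_
    obtain ⟨m, p, q, r⟩ := v
    simp [opA, opB, hba i (by omega) (by omega)]

theorem liftF_M (s : M) (j : ℤ) (y : FA K n) (m : M) :
    liftF K n s j y (m, 0, 0, 0) = (πB K n y • m, 0, 0, 0) := by
  induction y using FreeAlgebra.induction generalizing m with
  | grade0 r =>
    simp [Algebra.algebraMap_eq_smul_one]
  | grade1 g =>
    cases g <;> simp [liftF, opG, opA, opB, opC, aB, bB, cB, ga, gb, gc, Fin.is_le]
  | mul x y hx hy => simp [hx, hy, mul_smul]
  | add x y hx hy => simp [hx, hy, add_smul]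

theorem opC_e (s : M) (j : ℤ) : opC K n s j j (0, 1, 0, 0) = (s, 0, 0, 0) := by
  simp [opC]

theorem lann_c (j : ℤ) (h0 : 0 ≤ j) (h1 : j < n) (u : B K n) (hu : u * cB K n j = 0) :
    ∃ x', u = x' * cB K n (j - 1) := by
  let I : Ideal (B K n) := Ideal.span {cB K n (j - 1)}
  let s : B K n ⧸ I := Submodule.Quotient.mk (1 : B K n)
  have hs : cB K n (j - 1) • s = 0 := by
    change Submodule.Quotient.mk (cB K n (j - 1) • (1 : B K n)) = 0
    rw [Submodule.Quotient.mk_eq_zero, smul_eq_mul, mul_one]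
    exact Ideal.subset_span rfl
  let Φ : B K n →ₐ[K] Module.End K ((B K n ⧸ I) × K × K × K) :=
    RingQuot.liftAlgHom K ⟨liftF K n s j, by
      rintro x y ⟨hx, rfl⟩
      rw [liftF_rel s j h0 h1 hs x hx, map_zero]⟩
  have hΦ : ∀ y, Φ (πB K n y) = liftF K n s j y := fun y => by
    simp [Φ, πB]
  obtain ⟨y, rfl⟩ : ∃ y, πB K n y = u := RingQuot.mkAlgHom_surjective K _ u
  have key : Φ (πB K n y * cB K n j) (0, 1, 0, 0) = (πB K n y • s, 0, 0, 0) := by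
    rw [map_mul, cB, hΦ, hΦ, liftF_c s j j h0 h1.le, Module.End.mul_apply, ← liftF_M s j, opC_e]
  rw [hu, map_zero] at key
  have k2 : πB K n y • s = 0 := (congrArg Prod.fst key).symm
  change Submodule.Quotient.mk (πB K n y • (1 : B K n)) = 0 at k2
  rw [Submodule.Quotient.mk_eq_zero, smul_eq_mul, mul_one] at k2
  obtain ⟨z, hz⟩ := Ideal.mem_span_singleton'.1 k2
  exact ⟨z, hz.symm⟩

end aux

end

/-- Lemma 3.3(1). -/
theorem stmt_8 (K : Type) [Field K] (n : ℕ) (i : ℕ) (h1 : 1 ≤ i) (h2 : i ≤ n)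
    (w x : B K n)
    (h : w * (cB K n i * aB K n i * bB K n i) + x * cB K n ((i : ℤ) - 1) = 0) :
    ∃ w' w'' x' : B K n,
      w = w' + w'' * cB K n ((i : ℤ) - 1) ∧
      x = w' * (aB K n ((i : ℤ) - 1) * bB K n ((i : ℤ) - 1)) + x' * cB K n ((i : ℤ) - 2) := by
  have hr := rel_abc (K := K) (n := n) ((i : ℤ) - 1) (by omega) (by omega)
  rw [sub_add_cancel] at hr
  obtain ⟨x', hx'⟩ := lann_c (K := K) (n := n) ((i : ℤ) - 1) (by omega) (by omega)
    (x - w * (aB K n ((i : ℤ) - 1) * bB K n ((i : ℤ) - 1))) (by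
      have hw := congrArg (w * ·) hr
      simp only [mul_add, mul_zero] at hw
      rw [add_comm] at hw
      have := add_left_cancel (h.trans hw.symm)
      rw [sub_mul, mul_assoc w, this]
      exact sub_self _)
  refine ⟨w, 0, x', by simp, ?_⟩
  rw [show (i : ℤ) - 2 = (i : ℤ) - 1 - 1 by ring, ← hx']
  abel
end

section
/- The 2-periodic complex of free left B-modules ⋯ → B → B² → B → B² → B → B a_0 → 0, in which the differentials alternate between the map B → B², z ↦ (z a_0 b_0, z c_1 a_1), and the map B² → B, (w, x) ↦ w c_0 + x b_1, and in which the augmentation B → B a_0 is z ↦ z a_0 (the differential immediately preceding the augmentation being (w,x) ↦ w c_0 + x b_1), is exact; i.e., it is a free resolution of the left ideal B a_0 of B. -/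
namespace Stmt11

inductive L : Type
  | a : ℕ → L
  | b : ℕ → L
  | c : ℕ → L
  deriving DecidableEq

section
variable (K : Type) [Field K] (n : ℕ)

abbrev M := List L →₀ K

def killA (i : ℕ) : List L → Bool
  | (L.c j :: L.b k :: _) => (i = j ∧ i = k) ∨ (i = 0 ∧ j = 0)
  | (L.c j :: _) => i = 0 ∧ j = 0
  | (L.b j :: _) => j = i + 1
  | _ => false

noncomputable def Aw (i : ℕ) (u : List L) : M K :=
  if killA i u then 0 else Finsupp.single (L.a i :: u) 1

noncomputable def Bw (i : ℕ) (u : List L) : M K :=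
  if i ≤ n then Finsupp.single (L.b i :: u) 1 else 0

noncomputable def A (i : ℕ) : M K →ₗ[K] M K := Finsupp.linearCombination K (Aw K i)
noncomputable def Bo (i : ℕ) : M K →ₗ[K] M K := Finsupp.linearCombination K (Bw K n i)

noncomputable def Cw : ℕ → List L → M K
  | i, (L.b j :: L.a k :: v) =>
      if i = j ∧ i = k then - Bo K n (i+1) (A K (i+1) (Cw (i+1) v))
      else Finsupp.single (L.c i :: L.b j :: L.a k :: v) 1
  | i, (L.c j :: v) => if i = j + 1 then 0 else Finsupp.single (L.c i :: L.c j :: v) 1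
  | i, u => Finsupp.single (L.c i :: u) 1

noncomputable def C (i : ℕ) : M K →ₗ[K] M K := Finsupp.linearCombination K (Cw K n i)

@[simp] lemma A_single (i u) : A K i (Finsupp.single u 1) = Aw K i u := by simp [A]
@[simp] lemma B_single (i u) : Bo K n i (Finsupp.single u 1) = Bw K n i u := by simp [Bo]
@[simp] lemma C_single (i u) : C K n i (Finsupp.single u 1) = Cw K n i u := by simp [C]

lemma extM {N : Type*} [AddCommGroup N] [Module K N] (f g : M K →ₗ[K] N)
    (h : ∀ u, f (Finsupp.single u 1) = g (Finsupp.single u 1)) (m : M K) : f m = g m := by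
  have : f = g := by
    apply Finsupp.lhom_ext'
    intro u
    ext
    simpa using h u
  rw [this]

/-- b_{i+1} a_i -/
lemma R4 (i : ℕ) (m : M K) : A K i (Bo K n (i+1) m) = 0 := by
  refine extM K (A K i ∘ₗ Bo K n (i+1)) 0 (fun u => ?_) m
  simp only [LinearMap.comp_apply, B_single, Bw, LinearMap.zero_apply]
  split_ifs
  · simp [Aw, killA]
  · simp

lemma Cw_cases (i : ℕ) (u : List L) :
    (∃ v, u = L.b i :: L.a i :: v ∧ Cw K n i u = - Bo K n (i+1) (A K (i+1) (C K n (i+1) (Finsupp.single v 1))))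
    ∨ (∃ j v, i = j + 1 ∧ u = L.c j :: v ∧ Cw K n i u = 0)
    ∨ ((∀ v, u ≠ L.b i :: L.a i :: v) ∧ (∀ j v, i = j + 1 → u ≠ L.c j :: v) ∧
        Cw K n i u = Finsupp.single (L.c i :: u) 1) := by
  simp only [C_single]
  match u with
  | (L.b j :: L.a k :: v) =>
    by_cases h : i = j ∧ i = k
    · obtain ⟨rfl, rfl⟩ := h
      left; exact ⟨v, rfl, by simp [Cw]⟩
    · right; right
      refine ⟨?_, by simp, by simp [Cw, h]⟩
      intro v' h'
      simp at h'
      exact h ⟨h'.1.symm, h'.2.1.symm⟩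
  | (L.c j :: v) =>
    by_cases h : i = j + 1
    · right; left; exact ⟨j, v, h, rfl, by simp [Cw, h]⟩
    · right; right
      refine ⟨by simp, ?_, by simp [Cw, h]⟩
      intro j' v' e h'
      simp at h'
      exact h (h'.1 ▸ e)
  | [] => right; right; simp [Cw]
  | (L.a j :: v) => right; right; simp [Cw]
  | [L.b j] => right; right; simp [Cw]
  | (L.b j :: L.b k :: v) => right; right; simp [Cw]
  | (L.b j :: L.c k :: v) => right; right; simp [Cw]

/-- b_i c_i a_i -/
lemma R2 (i : ℕ) (m : M K) : A K i (C K n i (Bo K n i m)) = 0 := by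
  refine extM K (A K i ∘ₗ C K n i ∘ₗ Bo K n i) 0 (fun u => ?_) m
  simp only [LinearMap.comp_apply, B_single, Bw, LinearMap.zero_apply]
  split_ifs
  · rw [C_single]
    obtain ⟨v, -, h⟩ | ⟨j, v, -, h, -⟩ | ⟨-, -, h⟩ := Cw_cases K n i (L.b i :: u)
    · rw [h, map_neg, R4, neg_zero]
    · simp at h
    · rw [h, A_single]; simp [Aw, killA]
  · simp

lemma R5 (m : M K) : A K 0 (C K n 0 m) = 0 := by
  refine extM K (A K 0 ∘ₗ C K n 0) 0 (fun u => ?_) m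
  simp only [LinearMap.comp_apply, C_single, LinearMap.zero_apply]
  obtain ⟨v, -, h⟩ | ⟨j, v, h, -, -⟩ | ⟨-, -, h⟩ := Cw_cases K n 0 u
  · rw [h, map_neg, R4, neg_zero]
  · simp at h
  · rw [h, A_single, Aw, if_pos]
    match u with
    | [] => simp [killA]
    | (L.a j :: v) => simp [killA]
    | (L.b j :: v) => simp [killA]
    | (L.c j :: v) => simp [killA]

lemma Bzero (i : ℕ) (hi : n < i) (m : M K) : Bo K n i m = 0 := by
  refine extM K (Bo K n i) 0 (fun u => ?_) m
  simp [Bw, hi]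

lemma killA_cases (i : ℕ) (u : List L) (h : killA i u = true) :
    (∃ v, u = L.c i :: v) ∨ (∃ v, u = L.b (i+1) :: v) := by
  match u, h with
  | (L.c j :: L.b k :: v), h => simp [killA] at h; left; exact ⟨_, by congr 2; omega⟩
  | [L.c j], h => simp [killA] at h; left; exact ⟨_, by congr 2; omega⟩
  | (L.c j :: L.a k :: v), h => simp [killA] at h; left; exact ⟨_, by congr 2; omega⟩
  | (L.c j :: L.c k :: v), h => simp [killA] at h; left; exact ⟨_, by congr 2; omega⟩
  | (L.b j :: v), h => simp [killA] at h; right; exact ⟨_, by rw [h]⟩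
  | [], h => simp [killA] at h
  | (L.a j :: v), h => simp [killA] at h

lemma R1 (i : ℕ) (m : M K) :
    C K n i (Bo K n i (A K i m)) = - Bo K n (i+1) (A K (i+1) (C K n (i+1) m)) := by
  by_cases hi : n < i
  · rw [Bzero K n i hi, Bzero K n (i+1) (by omega)]; simp
  refine extM K (C K n i ∘ₗ Bo K n i ∘ₗ A K i) (-(Bo K n (i+1) ∘ₗ A K (i+1) ∘ₗ C K n (i+1)))
    (fun u => ?_) m
  simp only [LinearMap.comp_apply, A_single, LinearMap.neg_apply]
  by_cases hk : killA i u = true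
  · have h0 : Aw K i u = 0 := by simp [Aw, hk]
    rw [h0]
    simp only [map_zero]
    obtain ⟨v, rfl⟩ | ⟨v, rfl⟩ := killA_cases i u hk
    · simp [Cw]
    · by_cases hi' : i + 1 ≤ n
      · have := R2 K n (i+1) (Finsupp.single v 1)
        rw [B_single, Bw, if_pos hi'] at this
        rw [this]; simp
      · rw [Bzero K n (i+1) (by omega)]; simp
  · rw [Aw, if_neg hk, B_single, Bw, if_pos (by omega), C_single]
    simp [Cw]

lemma R3w (k : ℕ) : ∀ (u : List L) (i : ℕ), u.length ≤ k → C K n (i+1) (Cw K n i u) = 0 := by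
  induction k using Nat.strong_induction_on with
  | _ k ih =>
  intro u i hu
  obtain ⟨v, rfl, h⟩ | ⟨j, v, -, -, h⟩ | ⟨-, -, h⟩ := Cw_cases K n i u
  · rw [h, map_neg, R1, C_single, ih (k-1) (by simp at hu; omega) v (i+1) (by simp at hu; omega)]
    simp
  · rw [h, map_zero]
  · rw [h, C_single]; simp [Cw]

lemma R3 (i : ℕ) (m : M K) : C K n (i+1) (C K n i m) = 0 := by
  refine extM K (C K n (i+1) ∘ₗ C K n i) 0 (fun u => ?_) m
  simp [R3w K n _ u i le_rfl]

noncomputable def gact : Gen n → (Module.End K (M K))ᵐᵒᵖ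
  | Gen.a i => MulOpposite.op (A K i)
  | Gen.b i => MulOpposite.op (Bo K n i)
  | Gen.c i => MulOpposite.op (C K n i)

noncomputable def Φ : FA K n →ₐ[K] (Module.End K (M K))ᵐᵒᵖ := FreeAlgebra.lift K (gact K n)

lemma Φa (i : ℕ) (hi : i ≤ n) : Φ K n (ga K n i) = MulOpposite.op (A K i) := by
  simp [Φ, ga, hi, gact]
lemma Φb (i : ℕ) (hi : i ≤ n) : Φ K n (gb K n i) = MulOpposite.op (Bo K n i) := by
  simp [Φ, gb, hi, gact]
lemma Φc (i : ℕ) (hi : i ≤ n) : Φ K n (gc K n i) = MulOpposite.op (C K n i) := by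
  simp [Φ, gc, hi, gact]

lemma Φrel (x : FA K n) (hx : x ∈ rels K n) : Φ K n x = 0 := by
  apply MulOpposite.unop_injective
  apply LinearMap.ext
  intro m
  obtain rfl | rfl | ⟨i, hi, h⟩ := hx
  · simp only [map_mul, Φa K n n le_rfl, Φb K n n le_rfl, Φc K n n le_rfl, MulOpposite.unop_mul,
      MulOpposite.unop_op, Module.End.mul_apply, R1]
    rw [Bzero K n (n+1) (by omega)]; simp
  · have ha := Φa K n 0 (by omega)
    have hc := Φc K n 0 (by omega)
    simp only [Nat.cast_zero] at ha hc
    simp only [map_mul, ha, hc, MulOpposite.unop_mul,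
      MulOpposite.unop_op, Module.End.mul_apply, R5]
    simp
  · have e : ((i:ℤ) + 1) = ((i+1 : ℕ) : ℤ) := by push_cast; rfl
    rw [e] at h
    have h1 : i ≤ n := by omega
    have h2 : i + 1 ≤ n := by omega
    obtain rfl | rfl | rfl | rfl := h <;>
    simp only [map_mul, map_add, Φa K n _ h1, Φb K n _ h1, Φc K n _ h1, Φa K n _ h2, Φb K n _ h2,
      Φc K n _ h2, MulOpposite.unop_mul, MulOpposite.unop_add, LinearMap.add_apply,
      MulOpposite.unop_op, Module.End.mul_apply, R1, R2, R3, R4] <;> simp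

noncomputable def Φq : B K n →ₐ[K] (Module.End K (M K))ᵐᵒᵖ :=
  RingQuot.liftAlgHom K ⟨Φ K n, fun x y h => by
    obtain ⟨hx, rfl⟩ := h
    rw [Φrel K n _ hx, map_zero]⟩

lemma Φq_π (f : FA K n) : Φq K n (πB K n f) = Φ K n f := by
  simp [Φq, πB]

noncomputable def φ (z : B K n) : M K := (Φq K n z).unop (Finsupp.single [] 1)

lemma φ_add (z w : B K n) : φ K n (z + w) = φ K n z + φ K n w := by simp [φ]
lemma φ_zero : φ K n 0 = 0 := by simp [φ]
lemma φa (z : B K n) (i : ℕ) (hi : i ≤ n) : φ K n (z * aB K n i) = A K i (φ K n z) := by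
  simp [φ, aB, Φq_π, Φa K n i hi]
lemma φb (z : B K n) (i : ℕ) (hi : i ≤ n) : φ K n (z * bB K n i) = Bo K n i (φ K n z) := by
  simp [φ, bB, Φq_π, Φb K n i hi]
lemma φc (z : B K n) (i : ℕ) (hi : i ≤ n) : φ K n (z * cB K n i) = C K n i (φ K n z) := by
  simp [φ, cB, Φq_π, Φc K n i hi]

lemma π_rel (x : FA K n) (hx : x ∈ rels K n) : πB K n x = 0 := by
  have := RingQuot.mkAlgHom_rel K (s := BRel K n) (x := x) (y := 0) ⟨hx, rfl⟩
  simpa [πB] using this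

lemma a_big (i : ℕ) (h : n < i) : aB K n i = 0 := by
  have : ¬ (i ≤ n) := by omega
  simp [aB, ga, this]
lemma b_big (i : ℕ) (h : n < i) : bB K n i = 0 := by
  have : ¬ (i ≤ n) := by omega
  simp [bB, gb, this]
lemma c_big (i : ℕ) (h : n < i) : cB K n i = 0 := by
  have : ¬ (i ≤ n) := by omega
  simp [cB, gc, this]

lemma S1 (i : ℕ) : aB K n i * bB K n i * cB K n i =
    - (cB K n (i+1:ℕ) * aB K n (i+1:ℕ) * bB K n (i+1:ℕ)) := by
  rcases lt_trichotomy i n with h | rfl | h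
  · rw [eq_neg_iff_add_eq_zero]
    simpa [aB, bB, cB] using π_rel K n _ (Or.inr (Or.inr ⟨i, h, Or.inl rfl⟩))
  · rw [b_big K i (i+1) (by omega)]
    simpa [aB, bB, cB] using π_rel K i _ (Or.inl rfl)
  · rw [b_big K n i h, b_big K n (i+1) (by omega)]; simp

lemma S2 (i : ℕ) : bB K n (i+1:ℕ) * cB K n (i+1:ℕ) * aB K n (i+1:ℕ) = 0 := by
  by_cases h : i < n
  · simpa [aB, bB, cB] using π_rel K n _ (Or.inr (Or.inr ⟨i, h, Or.inr (Or.inl rfl)⟩))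
  · rw [b_big K n (i+1) (by omega)]; simp
lemma S3 (i : ℕ) : cB K n i * cB K n (i+1:ℕ) = 0 := by
  by_cases h : i < n
  · simpa [aB, bB, cB] using π_rel K n _ (Or.inr (Or.inr ⟨i, h, Or.inr (Or.inr (Or.inl rfl))⟩))
  · rw [c_big K n (i+1) (by omega)]; simp
lemma S4 (i : ℕ) : bB K n (i+1:ℕ) * aB K n i = 0 := by
  by_cases h : i < n
  · simpa [aB, bB, cB] using π_rel K n _ (Or.inr (Or.inr ⟨i, h, Or.inr (Or.inr (Or.inr rfl))⟩))
  · rw [b_big K n (i+1) (by omega)]; simp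
lemma S5 : cB K n 0 * aB K n 0 = 0 := by
  simpa [aB, bB, cB] using π_rel K n _ (Or.inr (Or.inl rfl))

noncomputable def wp : List L → B K n
  | [] => 1
  | (L.a i :: u) => wp u * aB K n i
  | (L.b i :: u) => wp u * bB K n i
  | (L.c i :: u) => wp u * cB K n i

noncomputable def ψ : M K →ₗ[K] B K n := Finsupp.linearCombination K (wp K n)

@[simp] lemma ψ_single (u) : ψ K n (Finsupp.single u 1) = wp K n u := by simp [ψ]

lemma killA_wp (i : ℕ) (u : List L) (h : killA i u = true) : wp K n u * aB K n i = 0 := by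
  have key : ∀ (j : ℕ) (x : B K n), (i = 0 ∧ j = 0) → x * cB K n j * aB K n i = 0 := by
    rintro j x ⟨rfl, rfl⟩
    rw [mul_assoc, Nat.cast_zero, S5, mul_zero]
  match u, h with
  | (L.c j :: L.b k :: v), h =>
    simp [killA] at h
    obtain ⟨rfl, rfl⟩ | h := h
    · cases i with
      | zero => exact key _ _ ⟨rfl, rfl⟩
      | succ i =>
        have := S2 K n i
        simp only [wp]
        rw [mul_assoc, mul_assoc, ← mul_assoc (bB _ _ _), this, mul_zero]
    · exact key _ _ h
  | [L.c j], h => simp [killA] at h; exact key _ _ h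
  | (L.c j :: L.a k :: v), h => simp [killA] at h; exact key _ _ h
  | (L.c j :: L.c k :: v), h => simp [killA] at h; exact key _ _ h
  | (L.b j :: v), h =>
    simp [killA] at h
    subst h
    simp only [wp]
    rw [mul_assoc, S4, mul_zero]
  | [], h => simp [killA] at h
  | (L.a j :: v), h => simp [killA] at h

lemma ψA (i : ℕ) (m : M K) : ψ K n (A K i m) = ψ K n m * aB K n i := by
  refine extM K (ψ K n ∘ₗ A K i) (LinearMap.mulRight K (aB K n i) ∘ₗ ψ K n) (fun u => ?_) m
  simp only [LinearMap.comp_apply, A_single, ψ_single, LinearMap.mulRight_apply, Aw]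
  split_ifs with h
  · rw [killA_wp K n i u h, map_zero]
  · simp [wp]

lemma ψB (i : ℕ) (m : M K) : ψ K n (Bo K n i m) = ψ K n m * bB K n i := by
  refine extM K (ψ K n ∘ₗ Bo K n i) (LinearMap.mulRight K (bB K n i) ∘ₗ ψ K n) (fun u => ?_) m
  simp only [LinearMap.comp_apply, B_single, ψ_single, LinearMap.mulRight_apply, Bw]
  split_ifs with h
  · simp [wp]
  · rw [b_big K n i (by omega)]; simp

lemma ψCw (k : ℕ) : ∀ (u : List L) (i : ℕ), u.length ≤ k →
    ψ K n (Cw K n i u) = wp K n u * cB K n i := by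
  induction k using Nat.strong_induction_on with
  | _ k ih =>
  intro u i hu
  obtain ⟨v, rfl, h⟩ | ⟨j, v, rfl, rfl, h⟩ | ⟨-, -, h⟩ := Cw_cases K n i u
  · rw [h, map_neg, ψB, ψA, C_single, ih (k-1) (by simp at hu; omega) v (i+1) (by simp at hu; omega)]
    have := S1 K n i
    simp only [wp, mul_assoc] at this ⊢
    rw [this]
    exact (mul_neg (α := B K n) (wp K n v) _).symm
  · rw [h, map_zero, wp, mul_assoc, S3, mul_zero]
  · rw [h]; simp [wp]

lemma ψC (i : ℕ) (m : M K) : ψ K n (C K n i m) = ψ K n m * cB K n i := by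
  refine extM K (ψ K n ∘ₗ C K n i) (LinearMap.mulRight K (cB K n i) ∘ₗ ψ K n) (fun u => ?_) m
  simp [ψCw K n _ u i le_rfl]

lemma ψΦ (f : FA K n) : ∀ m : M K, ψ K n ((Φ K n f).unop m) = ψ K n m * πB K n f := by
  induction f using FreeAlgebra.induction with
  | grade0 r => intro m; simp [Algebra.algebraMap_eq_smul_one]
  | grade1 x =>
    intro m
    cases x with
    | a i =>
      have hi : (i:ℕ) ≤ n := by omega
      simpa [Φ, gact, aB, ga, hi] using ψA K n i m
    | b i =>
      have hi : (i:ℕ) ≤ n := by omega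
      simpa [Φ, gact, bB, gb, hi] using ψB K n i m
    | c i =>
      have hi : (i:ℕ) ≤ n := by omega
      simpa [Φ, gact, cB, gc, hi] using ψC K n i m
  | mul x y hx hy => intro m; simp [hx, hy, mul_assoc]
  | add x y hx hy => intro m; simp [hx, hy, mul_add]

lemma ψφ (z : B K n) : ψ K n (φ K n z) = z := by
  obtain ⟨f, rfl⟩ : ∃ f, πB K n f = z := RingQuot.mkAlgHom_surjective K _ z
  rw [φ, Φq_π, ψΦ]
  simp [wp]

lemma coefA (i : ℕ) (u : List L) (h : ¬ killA i u = true) (m : M K) :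
    A K i m (L.a i :: u) = m u := by
  refine extM K (Finsupp.lapply (L.a i :: u) ∘ₗ A K i) (Finsupp.lapply u) (fun t => ?_) m
  simp only [LinearMap.comp_apply, A_single, Finsupp.lapply_apply, Aw]
  classical
  split_ifs with ht
  · have : t ≠ u := by rintro rfl; exact h ht
    simp [Finsupp.single_apply, this]
  · simp [Finsupp.single_apply]

lemma coefB (i : ℕ) (hi : i ≤ n) (u : List L) (m : M K) :
    Bo K n i m (L.b i :: u) = m u := by
  classical
  refine extM K (Finsupp.lapply (L.b i :: u) ∘ₗ Bo K n i) (Finsupp.lapply u) (fun t => ?_) m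
  simp [Bw, hi, Finsupp.single_apply]

lemma Binj (i : ℕ) (hi : i ≤ n) (m : M K) (h : Bo K n i m = 0) : m = 0 := by
  ext u
  rw [← coefB K n i hi u m, h]; rfl

lemma coefBc (i j : ℕ) (u : List L) (m : M K) :
    Bo K n i m (L.c j :: u) = 0 := by
  classical
  refine extM K (Finsupp.lapply (L.c j :: u) ∘ₗ Bo K n i) 0 (fun t => ?_) m
  simp only [LinearMap.comp_apply, B_single, Finsupp.lapply_apply, Bw]
  split_ifs <;> simp [Finsupp.single_apply]

lemma coefC (u : List L) (h : ∀ v, u ≠ L.b 0 :: L.a 0 :: v) (m : M K) :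
    C K n 0 m (L.c 0 :: u) = m u := by
  classical
  refine extM K (Finsupp.lapply (L.c 0 :: u) ∘ₗ C K n 0) (Finsupp.lapply u) (fun t => ?_) m
  simp only [LinearMap.comp_apply, C_single, Finsupp.lapply_apply]
  obtain ⟨v, rfl, e⟩ | ⟨j, v, e, -, -⟩ | ⟨-, -, e⟩ := Cw_cases K n 0 t
  · rw [e, Finsupp.neg_apply, coefBc, Finsupp.single_apply, if_neg (h v).symm, neg_zero]
  · simp at e
  · rw [e]; simp [Finsupp.single_apply]

lemma kerA (m : M K) (h : A K 0 m = 0) :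
    ψ K n m ∈ Ideal.span {cB K n 0, bB K n 1} := by
  rw [ψ, Finsupp.linearCombination_apply, Finsupp.sum]
  refine Submodule.sum_mem _ (fun u hu => ?_)
  have hk : killA 0 u = true := by
    by_contra hk
    have := coefA K 0 u hk m
    rw [h] at this
    simp at hu
    exact hu this.symm
  rw [Algebra.smul_def]
  apply Ideal.mul_mem_left
  obtain ⟨v, rfl⟩ | ⟨v, rfl⟩ := killA_cases 0 u hk
  · exact Ideal.mul_mem_left _ _ (Ideal.subset_span (by simp))
  · exact Ideal.mul_mem_left _ _ (Ideal.subset_span (by simp))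

lemma fwd1 (hn : 1 ≤ n) (z : B K n) (h : z * (aB K n 0 * bB K n 0) = 0) :
    ∃ w x : B K n, z = w * cB K n 0 + x * bB K n 1 := by
  have ha := φa K n z 0 (by omega)
  have hb := φb K n (z * aB K n 0) 0 (by omega)
  rw [Nat.cast_zero] at ha hb
  rw [mul_assoc, h, φ_zero, ha] at hb
  have := kerA K n _ (Binj K n 0 (by omega) _ hb.symm)
  rw [ψφ, Ideal.mem_span_pair] at this
  obtain ⟨w, x, h⟩ := this
  exact ⟨w, x, h.symm⟩

lemma fwd2 (hn : 1 ≤ n) (w x : B K n) (h : w * cB K n 0 + x * bB K n 1 = 0) :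
    ∃ z : B K n, w = z * (aB K n 0 * bB K n 0) ∧ x = z * (cB K n 1 * aB K n 1) := by
  have hc := φc K n w 0 (by omega)
  have hb := φb K n x 1 hn
  rw [Nat.cast_zero] at hc
  rw [Nat.cast_one] at hb
  have h' := congrArg (φ K n) h
  rw [φ_add, hc, hb, φ_zero] at h'
  set m := φ K n w with hm
  set p := φ K n x with hp
  let f : List L → List L := fun v => L.b 0 :: L.a 0 :: v
  have hf : Function.Injective f := fun v v' e => by simpa [f] using e
  have hsupp : ↑m.support ⊆ Set.range f := by
    intro u hu
    by_contra hr
    have e := coefC K n u (fun v hv => hr ⟨v, hv.symm⟩) m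
    have e2 := coefBc K n 1 0 u p
    have e3 := DFunLike.congr_fun h' (L.c 0 :: u)
    rw [Finsupp.add_apply, e, e2, add_zero] at e3
    simp at hu
    exact hu e3
  let q := Finsupp.comapDomain f m hf.injOn
  have hq : Finsupp.mapDomain f q = m := Finsupp.mapDomain_comapDomain f hf m hsupp
  have g1 : ∀ q : M K, C K n 0 (Finsupp.mapDomain f q) =
      - Bo K n 1 (A K 1 (C K n 1 q)) := by
    intro q
    refine extM K (C K n 0 ∘ₗ Finsupp.lmapDomain K K f) (-(Bo K n 1 ∘ₗ A K 1 ∘ₗ C K n 1))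
      (fun u => ?_) q
    simp [f, Cw]
  have g2 : ∀ q : M K, ψ K n (Finsupp.mapDomain f q) = ψ K n q * (aB K n 0 * bB K n 0) := by
    intro q
    refine extM K (ψ K n ∘ₗ Finsupp.lmapDomain K K f)
      (LinearMap.mulRight K (aB K n 0 * bB K n 0) ∘ₗ ψ K n) (fun u => ?_) q
    simp [f, wp, mul_assoc]
  have hpq : p = A K 1 (C K n 1 q) := by
    rw [← sub_eq_zero]
    apply Binj K n 1 hn
    rw [map_sub, ← h', ← hq, g1]
    abel
  refine ⟨ψ K n q, ?_, ?_⟩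
  · rw [← g2, hq, hm, ψφ]
  · have := ψφ K n x
    rw [← hp, hpq, ψA, ψC, Nat.cast_one, mul_assoc] at this
    exact this.symm

end

end Stmt11

/-- Lemma 3.4, for `n ≥ 1`. The 2-periodic complex
`⋯ → B → B² → B → B² → B → B a_0 → 0`, with differentials alternating between
`z ↦ (z a_0 b_0, z c_1 a_1)` and `(w, x) ↦ w c_0 + x b_1`, and augmentation `z ↦ z a_0`,
is exact, i.e. it is a free resolution of `B a_0`. -/
theorem stmt_11 (K : Type) [Field K] (n : ℕ) (hn : 1 ≤ n) :
    -- the augmentation `z ↦ z a_0` maps onto the left ideal `B a_0`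
    (∀ y, y ∈ Ideal.span {aB K n 0} ↔ ∃ z : B K n, y = z * aB K n 0) ∧
    -- exactness at the augmentation spot: ker(z ↦ z a_0) = im((w,x) ↦ w c_0 + x b_1)
    (∀ z : B K n, z * aB K n 0 = 0 ↔ ∃ w x : B K n, z = w * cB K n 0 + x * bB K n 1) ∧
    -- exactness at the `B²` spots
    (∀ w x : B K n,
      (w * cB K n 0 + x * bB K n 1 = 0) ↔
      (∃ z : B K n, w = z * (aB K n 0 * bB K n 0) ∧ x = z * (cB K n 1 * aB K n 1))) ∧
    -- exactness at the `B` spots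
    (∀ z : B K n,
      (z * (aB K n 0 * bB K n 0) = 0 ∧ z * (cB K n 1 * aB K n 1) = 0) ↔
      (∃ w x : B K n, z = w * cB K n 0 + x * bB K n 1)) := by
  have ca : cB K n 0 * aB K n 0 = 0 := Stmt11.S5 K n
  have ba : bB K n 1 * aB K n 0 = 0 := by simpa using Stmt11.S4 K n 0
  have cc : cB K n 0 * cB K n 1 = 0 := by simpa using Stmt11.S3 K n 0
  have bca : bB K n 1 * cB K n 1 * aB K n 1 = 0 := by simpa using Stmt11.S2 K n 0
  have abc : aB K n 0 * bB K n 0 * cB K n 0 = -(cB K n 1 * aB K n 1 * bB K n 1) := by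
    simpa using Stmt11.S1 K n 0
  refine ⟨?_, ?_, ?_, ?_⟩
  · intro y
    rw [Ideal.mem_span_singleton']
    exact ⟨fun ⟨z, h⟩ => ⟨z, h.symm⟩, fun ⟨z, h⟩ => ⟨z, h.symm⟩⟩
  · intro z
    constructor
    · intro h
      apply Stmt11.fwd1 K n hn
      rw [← mul_assoc, h, zero_mul]
    · rintro ⟨w, x, rfl⟩
      rw [add_mul, mul_assoc, mul_assoc, ca, ba, mul_zero, mul_zero, add_zero]
  · intro w x
    constructor
    · exact Stmt11.fwd2 K n hn w x
    · rintro ⟨z, rfl, rfl⟩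
      rw [mul_assoc z, mul_assoc z, ← mul_add, abc]
      exact (congrArg (z * ·) (neg_add_cancel _)).trans (mul_zero z)
  · intro z
    constructor
    · rintro ⟨h, -⟩
      exact Stmt11.fwd1 K n hn z h
    · rintro ⟨w, x, rfl⟩
      constructor
      · rw [← mul_assoc, add_mul, mul_assoc w, mul_assoc x, ca, ba]
        simp
      · rw [add_mul, mul_assoc w, mul_assoc x, ← mul_assoc (cB K n 0), ← mul_assoc (bB K n 1),
          cc, bca]
        simp
end
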